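/- Let C ⊆ ℝⁿ be a convex body, let 1 ≤ k ≤ n, let μ₁, …, μ_k be probability measures on C absolutely continuous with respect to Lebesgue measure, and let σ₁, …, σ_{n−k} be probability measures on the boundary ∂C absolutely continuous with respect to the (n−1)-dimensional Hausdorff measure on ∂C. Then for every integer q ≥ 1 the body C can be partitioned into q closed convex parts V₁, …, V_q (their union is C and their pairwise intersections have Lebesgue measure zero) such that μᵢ(V₁) = ⋯ = μᵢ(V_q) for every i = 1, …, k, and σᵢ(V₁ ∩ ∂C) = ⋯ = σᵢ(V_q ∩ ∂C) for every i = 1, …, n−k. -/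

import Mathlib

open MeasureTheory

/-!
The proof is by induction on the number `q` of parts, for the more general class of families of `n`
measures on a closed convex set `C` that have equal mass, do not charge any hyperplane meeting the
interior of `C`, and of which at least one is absolutely continuous (`Goal`). Measures on the boundary
qualify, because a hyperplane `H` through an interior point meets `∂C` in the relative boundary of
the convex set `C ∩ H`, which is null in dimension `n - 1` (`hausdorff_hyperplane_frontier`).
A composite `q = b * c` is settled by partitioning into `b` parts and each of these into `c` parts.

For a prime `p`, consider `p`-tuples `f` of affine functions and the cells where one of them is
maximal. At finite temperature `1 / s` the indicator functions of the cells are replaced by softmax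
weights, whose integrals depend continuously and equivariantly on `f` even where some of the functions
coincide. An approximate Borsuk–Ulam theorem for the cyclic group (`exists_approx_balanced`) gives
`f` in a compact set `core` of non-constant tuples for which the masses of the `p` indices are almost
equal, for all `n` measures. As `s → ∞`, a subsequence converges to a tuple `f` in `core`, and the
limiting cells satisfy: the cell of a value `t` has mass `m / p` of the total, where `m` is the number
of indices with the value `t` (`real_cell`, `exists_cells`). The absolutely continuous measure ensures
that all cells have positive volume, so hyperplanes between cells meet the interior and are null for
the other measures too. Since `f` is not constant, `m < p`, and the cells are partitioned further by
the induction hypothesis (`parts_of_refine`).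

The Borsuk–Ulam theorem is proved by elementary means. Simplicial chains in the configuration space
are built by iterated subdivided cones over the orbits of the cyclic group, in such a way that,
modulo `p`, the boundary of each chain is the norm or the `1 - γ` image of the previous one
(`chain_delta`). If the conclusion failed, points could be labelled equivariantly by `ZMod p × Fin n`
so that small simplices never carry a full column of labels. The complex of such label sets has
dimension `n * (p - 1) - 1` and carries a free action, so the periodic complex of alternating cochains
on it is exact (`exists_tr_eq`); climbing up this complex one transports the value `1` of the constant
cochain on a point to degree `n * (p - 1)`, where all cochains vanish (`no_labelling`).
-/

/-! ### Cochains on lists with a cyclic group action -/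

namespace EquiPart

section Cochains

variable {X k : Type*} [CommRing k]

/-- The simplicial coboundary of a cochain `β` on the full simplicial set over `X`, a cochain of any
degree being a function on ordered vertex lists:
`delta β [x₀, …, xₘ] = ∑ᵢ (-1)ⁱ β [x₀, …, x̂ᵢ, …, xₘ]`, computed by recursion on the list. -/
def delta : (List X → k) → List X → k
  | _, [] => 0
  | β, x :: l => β l - delta (fun t => β (x :: t)) l

/-- The prism operator of a pair of vertex maps:
`prism φ ψ β [x₀, …, xₘ] = ∑ᵢ (-1)ⁱ β [φ x₀, …, φ xᵢ, ψ xᵢ, …, ψ xₘ]`. -/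
def prism (φ ψ : X → X) : (List X → k) → List X → k
  | _, [] => 0
  | β, x :: l => β (φ x :: ψ x :: l.map ψ) - prism φ ψ (fun t => β (φ x :: t)) l

theorem delta_sub (β β' : List X → k) (l : List X) :
    delta (fun l => β l - β' l) l = delta β l - delta β' l := by
  induction l generalizing β β' with
  | nil => simp [delta]
  | cons x l ih => simp only [delta, ih]; ring

theorem delta_zero (l : List X) : delta (fun _ => (0 : k)) l = 0 := by
  induction l with
  | nil => simp [delta]
  | cons x l ih => simp [delta, ih]

theorem delta_neg (β : List X → k) (l : List X) :
    delta (fun l => -β l) l = -delta β l := by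
  have h := delta_sub (fun _ => (0 : k)) β l
  simpa [delta_zero] using h

theorem delta_add (β β' : List X → k) (l : List X) :
    delta (fun l => β l + β' l) l = delta β l + delta β' l := by
  have h := delta_sub β (fun l => -β' l) l
  simpa [delta_neg] using h

theorem delta_sum {ι : Type*} (s : Finset ι) (β : ι → List X → k) (l : List X) :
    delta (fun l => ∑ i ∈ s, β i l) l = ∑ i ∈ s, delta (β i) l := by
  classical
  induction s using Finset.induction_on with
  | empty => simp [delta_zero]
  | insert a s ha ih => simp only [Finset.sum_insert ha, delta_add, ih]

theorem delta_map {Y : Type*} (f : X → Y) (β : List Y → k) (l : List X) :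
    delta (fun l => β (l.map f)) l = delta β (l.map f) := by
  induction l generalizing β with
  | nil => simp [delta]
  | cons x l ih =>
    simp only [delta, List.map_cons]
    rw [ih (fun l' => β (f x :: l'))]

theorem delta_delta (β : List X → k) (l : List X) : delta (delta β) l = 0 := by
  induction l generalizing β with
  | nil => simp [delta]
  | cons x l ih =>
    have h : (fun l' => delta β (x :: l')) =
        fun l' => β l' - delta (fun l'' => β (x :: l'')) l' := by
      funext l'; simp [delta]
    rw [delta, h, delta_sub, ih]; simp

/-- The coboundary is computed on sublists only, so it respects equality on a property `P` inherited
by sublists. -/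
theorem delta_congr (P : List X → Prop) (hP : ∀ l l' : List X, l' ⊆ l → P l → P l')
    (β β' : List X → k) (h : ∀ l, P l → β l = β' l) (l : List X) (hl : P l) :
    delta β l = delta β' l := by
  suffices H : ∀ (l l₀ : List X) (β β' : List X → k), l ⊆ l₀ →
      (∀ l', l' ⊆ l₀ → β l' = β' l') → delta β l = delta β' l from
    H l l β β' (List.Subset.refl l) (fun l' hl' => h l' (hP l l' hl' hl))
  intro l l₀
  induction l with
  | nil => intros; simp [delta]
  | cons x l ih =>
    intro β β' hl hβ
    rw [List.cons_subset] at hl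
    simp only [delta]
    rw [hβ l hl.2, ih (fun t => β (x :: t)) (fun t => β' (x :: t)) hl.2
      (fun t ht => hβ _ (List.cons_subset.2 ⟨hl.1, ht⟩))]

/-- The prism operator is a cochain homotopy between the two pull-backs. -/
theorem prism_homotopy (φ ψ : X → X) (β : List X → k) (l : List X) :
    prism φ ψ (delta β) l + delta (prism φ ψ β) l = β (l.map ψ) - β (l.map φ) := by
  have psub : ∀ (l : List X) (β β' : List X → k),
      prism φ ψ (fun l => β l - β' l) l = prism φ ψ β l - prism φ ψ β' l := by
    intro l
    induction l with
    | nil => intros; simp [prism]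
    | cons x l ih => intro β β'; simp only [prism, ih]; ring
  induction l generalizing β with
  | nil => simp [prism, delta]
  | cons x l ih =>
    have h1 : (fun l' => delta β (φ x :: l')) =
        fun l' => β l' - delta (fun l'' => β (φ x :: l'')) l' := by
      funext l'; simp [delta]
    have h2 : (fun l' => prism φ ψ β (x :: l')) = fun l' =>
        (fun m => β (φ x :: ψ x :: m)) (l'.map ψ) - prism φ ψ (fun l'' => β (φ x :: l'')) l' := by
      funext l'; simp [prism]
    have e1 : prism φ ψ (delta β) (x :: l) =
        delta β (φ x :: ψ x :: l.map ψ) - prism φ ψ (fun l' => delta β (φ x :: l')) l := rfl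
    have e2 : delta (prism φ ψ β) (x :: l) =
        prism φ ψ β l - delta (fun l' => prism φ ψ β (x :: l')) l := rfl
    rw [e1, e2, h1, h2, psub, delta_sub, delta_map ψ (fun m => β (φ x :: ψ x :: m))]
    have := ih (fun l'' => β (φ x :: l''))
    simp only [delta, List.map_cons]
    linear_combination this

theorem prism_sub (φ ψ : X → X) (β β' : List X → k) (l : List X) :
    prism φ ψ (fun l => β l - β' l) l = prism φ ψ β l - prism φ ψ β' l := by
  induction l generalizing β β' with
  | nil => simp [prism]
  | cons x l ih => simp only [prism, ih]; ring

theorem prism_congr (φ ψ : X → X) (β β' : List X → k) (l : List X)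
    (h : ∀ l' : List X, l'.length = l.length + 1 →
      (∀ a ∈ l', ∃ x ∈ l, a = φ x ∨ a = ψ x) → β l' = β' l') :
    prism φ ψ β l = prism φ ψ β' l := by
  induction l generalizing β β' with
  | nil => simp [prism]
  | cons x l ih =>
    simp only [prism]
    congr 1
    · apply h
      · simp
      · intro a ha
        simp only [List.mem_cons, List.mem_map] at ha
        rcases ha with rfl | rfl | ⟨y, hy, rfl⟩
        · exact ⟨x, by simp, Or.inl rfl⟩
        · exact ⟨x, by simp, Or.inr rfl⟩
        · exact ⟨y, by simp [hy], Or.inr rfl⟩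
    · apply ih
      intro l' hl' ha
      apply h
      · simp [hl']
      · intro a ha'
        rcases List.mem_cons.1 ha' with rfl | ha'
        · exact ⟨x, by simp, Or.inl rfl⟩
        · obtain ⟨y, hy, h⟩ := ha a ha'
          exact ⟨y, by simp [hy], h⟩

/-- Alternating cochains: zero on lists with two equal neighbours, and changing sign when two
neighbours are swapped. -/
def Alt (β : List X → k) : Prop :=
  (∀ l₁ x l₂, β (l₁ ++ x :: x :: l₂) = 0) ∧
    ∀ l₁ x y l₂, β (l₁ ++ x :: y :: l₂) = -β (l₁ ++ y :: x :: l₂)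

theorem Alt.cons {β : List X → k} (h : Alt β) (a : X) : Alt (fun l => β (a :: l)) :=
  ⟨fun l₁ x l₂ => h.1 (a :: l₁) x l₂, fun l₁ x y l₂ => h.2 (a :: l₁) x y l₂⟩

theorem Alt.delta {β : List X → k} (h : Alt β) : Alt (delta β) := by
  constructor
  · intro l₁
    induction l₁ generalizing β with
    | nil =>
      intro x l₂
      have h0 : (fun l' => β (x :: x :: l')) = fun _ => 0 := by
        funext l'; exact h.1 [] x l'
      simp [EquiPart.delta, h0, delta_zero]
    | cons a l₁ ih =>
      intro x l₂
      simp only [List.cons_append, EquiPart.delta]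
      rw [h.1, ih (h.cons a)]; simp
  · intro l₁
    induction l₁ generalizing β with
    | nil =>
      intro x y l₂
      have h0 : (fun l' => β (x :: y :: l')) = fun l' => -β (y :: x :: l') := by
        funext l'; exact h.2 [] x y l'
      simp only [List.nil_append, EquiPart.delta, h0, delta_neg]
      ring
    | cons a l₁ ih =>
      intro x y l₂
      simp only [List.cons_append, EquiPart.delta]
      rw [h.2, ih (h.cons a)]; ring

/-- An alternating cochain vanishes on every list with a repeated vertex, adjacent or not. -/
theorem Alt.eq_zero {β : List X → k} (h : Alt β) {l : List X} (hl : ¬ l.Nodup) : β l = 0 := by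
  have key : ∀ (l : List X) (β : List X → k), Alt β → ∀ x ∈ l, β (x :: l) = 0 := by
    intro l
    induction l with
    | nil => intro β _ x hx; simp at hx
    | cons y l ih =>
      intro β hβ x hx
      by_cases hxy : x = y
      · subst hxy; exact hβ.1 [] x l
      · have hx' : x ∈ l := by
          rcases List.mem_cons.1 hx with h | h
          · exact absurd h hxy
          · exact h
        have := hβ.2 [] x y l
        simp only [List.nil_append] at this
        rw [this, ih _ (hβ.cons y) x hx', neg_zero]
  induction l generalizing β with
  | nil => simp at hl
  | cons a l ih =>
    by_cases ha : a ∈ l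
    · exact key l β h a ha
    · exact ih (h.cons a) (fun hn => hl (List.nodup_cons.2 ⟨ha, hn⟩))

theorem Alt.map {Y : Type*} {β : List Y → k} (h : Alt β) (f : X → Y) :
    Alt (fun l => β (l.map f)) :=
  ⟨fun l₁ x l₂ => by simpa using h.1 (l₁.map f) (f x) (l₂.map f),
    fun l₁ x y l₂ => by simpa using h.2 (l₁.map f) (f x) (f y) (l₂.map f)⟩

theorem Alt.neg {β : List X → k} (h : Alt β) : Alt (fun l => -β l) :=
  ⟨fun l₁ x l₂ => by simp [h.1], fun l₁ x y l₂ => by simp only [h.2 l₁ x y]⟩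

theorem Alt.sum {ι : Type*} {s : Finset ι} {β : ι → List X → k} (h : ∀ i ∈ s, Alt (β i)) :
    Alt (fun l => ∑ i ∈ s, β i l) :=
  ⟨fun l₁ x l₂ => Finset.sum_eq_zero fun i hi => (h i hi).1 _ _ _,
    fun l₁ x y l₂ => by
      rw [← Finset.sum_neg_distrib]
      exact Finset.sum_congr rfl fun i hi => (h i hi).2 _ _ _ _⟩

theorem Alt.mul {β χ : List X → k} (h : Alt β) (hχ : ∀ l l' : List X, l.Perm l' → χ l = χ l') :
    Alt (fun l => χ l * β l) :=
  ⟨fun l₁ x l₂ => by simp [h.1], fun l₁ x y l₂ => by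
    simp only [h.2 l₁ x y]
    rw [hχ (l₁ ++ x :: y :: l₂) (l₁ ++ y :: x :: l₂)
      (List.Perm.append_left l₁ (List.Perm.swap y x l₂))]
    ring⟩

/-- The two operators of the periodic resolution of the cyclic group of order `p` acting through
`γ`: the norm `1 + γ + ⋯ + γ^(p-1)` in even index, and `1 - γ` in odd index. -/
def tr (p : ℕ) (γ : X → X) (m : ℕ) (β : List X → k) (l : List X) : k :=
  if Even m then ∑ i ∈ Finset.range p, β (l.map γ^[i]) else β l - β (l.map γ)

variable {p : ℕ} {γ : X → X}

theorem tr_sub (m : ℕ) (β β' : List X → k) :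
    tr p γ m (fun l => β l - β' l) = fun l => tr p γ m β l - tr p γ m β' l := by
  funext l
  unfold tr
  split_ifs
  · rw [Finset.sum_sub_distrib]
  · ring

theorem delta_tr (m : ℕ) (β : List X → k) (l : List X) :
    delta (tr p γ m β) l = tr p γ m (delta β) l := by
  by_cases hm : Even m
  · have : tr p γ m β = fun l => ∑ i ∈ Finset.range p, β (l.map γ^[i]) := by
      funext l; simp [tr, hm]
    rw [this, delta_sum]
    simp only [tr, hm, if_true]
    exact Finset.sum_congr rfl fun i _ => delta_map γ^[i] β l
  · have : tr p γ m β = fun l => β l - β (l.map γ) := by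
      funext l; simp [tr, hm]
    rw [this, delta_sub, delta_map γ β]
    simp [tr, hm]

theorem sum_iterate_map (hγ : γ^[p] = id) (β : List X → k) (l : List X) :
    ∑ i ∈ Finset.range p, β ((l.map γ).map γ^[i]) = ∑ i ∈ Finset.range p, β (l.map γ^[i]) := by
  have h1 : ∀ i, (l.map γ).map γ^[i] = l.map γ^[i + 1] := by
    intro i; rw [List.map_map, ← Function.iterate_succ]
  simp only [h1]
  have h := Finset.sum_range_succ' (fun i => β (l.map γ^[i])) p
  rw [Finset.sum_range_succ, hγ] at h
  simpa using h.symm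

/-- Norm and `1 - γ` compose to zero. -/
theorem tr_tr (hγ : γ^[p] = id) (m : ℕ) (β : List X → k) (l : List X) :
    tr p γ m (tr p γ (m + 1) β) l = 0 := by
  by_cases hm : Even m
  · have hm' : ¬ Even (m + 1) := by simpa [Nat.even_add_one] using hm
    simp only [tr, hm, hm', if_true, if_false]
    rw [Finset.sum_sub_distrib, sub_eq_zero]
    rw [← sum_iterate_map hγ]
    refine Finset.sum_congr rfl fun i _ => ?_
    rw [List.map_map, List.map_map]
    congr 2
    exact (Function.Commute.iterate_self γ i).comp_eq
  · have hm' : Even (m + 1) := by simpa [Nat.even_add_one] using hm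
    simp only [tr, hm, hm', if_true, if_false]
    rw [sum_iterate_map hγ, sub_self]

theorem tr_congr (P : List X → Prop) (hP : ∀ l, P l → P (l.map γ))
    (m : ℕ) (β β' : List X → k) (h : ∀ l, P l → β l = β' l) (l : List X) (hl : P l) :
    tr p γ m β l = tr p γ m β' l := by
  have hi : ∀ i, P (l.map γ^[i]) := by
    intro i
    induction i with
    | zero => simpa using hl
    | succ i ih =>
      rw [Function.iterate_succ', ← List.map_map]; exact hP _ ih
  unfold tr
  split_ifs
  · exact Finset.sum_congr rfl fun i _ => h _ (hi i)
  · rw [h l hl, h _ (hP l hl)]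

/-- Exactness of the periodic complex on alternating cochains over the lists satisfying `P`.
The permutation-invariant weight `χ`, whose translates sum to `1`, plays the role of the
indicator function of a fundamental domain of a free action; it provides the contraction. -/
theorem exists_tr_eq (hγ : γ^[p] = id) (P : List X → Prop)
    (χ : List X → k) (hχ : ∀ l l' : List X, l.Perm l' → χ l = χ l')
    (hχ1 : ∀ l, P l → l ≠ [] → ∑ i ∈ Finset.range p, χ (l.map γ^[i]) = 1)
    (hP : ∀ l, P l → P (l.map γ))
    (m : ℕ) (z : List X → k) (hz : Alt z) (hz0 : z [] = 0)
    (hT : ∀ l, P l → tr p γ (m + 1) z l = 0) :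
    ∃ b : List X → k, Alt b ∧ b [] = 0 ∧ ∀ l, P l → tr p γ m b l = z l := by
  have hi : ∀ i l, P l → P (l.map γ^[i]) := by
    intro i l hl
    induction i with
    | zero => simpa using hl
    | succ i ih =>
      rw [Function.iterate_succ', ← List.map_map]; exact hP _ ih
  by_cases hm : Even m
  · have hm' : ¬ Even (m + 1) := by simpa [Nat.even_add_one] using hm
    refine ⟨fun l => χ l * z l, hz.mul hχ, by simp [hz0], fun l hl => ?_⟩
    have hinv : ∀ l, P l → z (l.map γ) = z l := by
      intro l hl
      have := hT l hl
      simp only [tr, hm', if_false] at this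
      exact (sub_eq_zero.1 this).symm
    have hinv' : ∀ i, z (l.map γ^[i]) = z l := by
      intro i
      induction i with
      | zero => simp
      | succ i ih => rw [Function.iterate_succ', ← List.map_map, hinv _ (hi i l hl), ih]
    simp only [tr, hm, if_true, hinv']
    rw [← Finset.sum_mul]
    by_cases hl0 : l = []
    · simp [hl0, hz0]
    · rw [hχ1 l hl hl0, one_mul]
  · have hm' : Even (m + 1) := by simpa [Nat.even_add_one] using hm
    set u : ℕ → List X → k := fun i l => χ l * z (l.map γ^[p - i]) with hu
    refine ⟨fun l => -∑ i ∈ Finset.range p, ∑ j ∈ Finset.range i, u i (l.map γ^[j]), ?_, ?_, ?_⟩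
    · exact (Alt.sum fun i _ => Alt.sum fun j _ =>
        Alt.map ((hz.map γ^[p - i]).mul hχ) γ^[j]).neg
    · simp [hu, hz0]
    · intro l hl
      have htel : ∀ i, (∑ j ∈ Finset.range i, u i ((l.map γ).map γ^[j])) -
          ∑ j ∈ Finset.range i, u i (l.map γ^[j]) = u i (l.map γ^[i]) - u i l := by
        intro i
        rw [← Finset.sum_sub_distrib]
        have h1 : ∀ j, (l.map γ).map γ^[j] = l.map γ^[j + 1] := by
          intro j; rw [List.map_map, ← Function.iterate_succ]
        simp only [h1]
        rw [Finset.sum_range_sub (fun j => u i (l.map γ^[j]))]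
        simp
      have hsum0 : ∑ i ∈ Finset.range p, u i l = 0 := by
        simp only [hu]
        rw [← Finset.mul_sum]
        have h2 := hT l hl
        simp only [tr, hm', if_true] at h2
        have h3 : ∑ i ∈ Finset.range p, z (l.map γ^[p - i]) =
            ∑ i ∈ Finset.range p, z (l.map γ^[i]) := by
          rw [← sum_iterate_map hγ z l,
            ← Finset.sum_range_reflect (fun i => z ((l.map γ).map γ^[i]))]
          refine Finset.sum_congr rfl fun i hi => ?_
          rw [List.map_map, ← Function.iterate_succ]
          have := Finset.mem_range.1 hi
          congr 3
          omega
        rw [h3, h2, mul_zero]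
      have hsum1 : ∑ i ∈ Finset.range p, u i (l.map γ^[i]) = z l := by
        have : ∀ i ∈ Finset.range p, u i (l.map γ^[i]) = χ (l.map γ^[i]) * z l := by
          intro i hi
          have hi := Finset.mem_range.1 hi
          simp only [hu]
          rw [List.map_map, ← Function.iterate_add, Nat.sub_add_cancel hi.le, hγ, List.map_id]
        rw [Finset.sum_congr rfl this, ← Finset.sum_mul]
        by_cases hl0 : l = []
        · simp [hl0, hz0]
        · rw [hχ1 l hl hl0, one_mul]
      simp only [tr, hm, if_false]
      rw [neg_sub_neg, ← Finset.sum_sub_distrib, Finset.sum_congr rfl fun i _ => htel i,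
        Finset.sum_sub_distrib, hsum0, hsum1, sub_zero]

end Cochains
end EquiPart

/-! ### Iterated cones and Stokes' formula -/

namespace EquiPart

section Chains

variable {U k : Type*} [NormedAddCommGroup U] [NormedSpace ℝ U] [CommRing k]

/-- The `j`-th of `R` equal steps of the straight contraction towards the apex `v`. -/
noncomputable def coneMap (v : U) (R j : ℕ) (x : U) : U := AffineMap.lineMap x v ((j : ℝ) / R)

/-- The cone with apex `v`, subdivided into `R` thin slabs, as an operator on cochains. -/
noncomputable def conePrism (v : U) (R : ℕ) (β : List U → k) (l : List U) : k :=
  ∑ j ∈ Finset.range R, prism (coneMap v R j) (coneMap v R (j + 1)) β l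

/-- Evaluation of a degree `m` cochain on an explicit `m`-chain. The chain in degree `0` is the
point `v 0`; the chain in degree `m + 1` is the subdivided cone with apex `v (m + 1)` over the image
of the chain in degree `m` under `tr p γ m`. -/
noncomputable def chain (p : ℕ) (γ : U → U) (v : ℕ → U) (R : ℕ) : ℕ → (List U → k) → k
  | 0, β => β [v 0]
  | m + 1, β => chain p γ v R m (tr p γ m (conePrism (v (m + 1)) R β))

theorem conePrism_homotopy (v : U) {R : ℕ} (hR : R ≠ 0) (β : List U → k) (l : List U) :
    conePrism v R (delta β) l =
      β (l.map fun _ => v) - β l - delta (conePrism v R β) l := by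
  have h1 : delta (conePrism v R β) l = ∑ j ∈ Finset.range R,
      delta (prism (coneMap v R j) (coneMap v R (j + 1)) β) l :=
    delta_sum (Finset.range R) (fun j => prism (coneMap v R j) (coneMap v R (j + 1)) β) l
  have h2 : conePrism v R (delta β) l + delta (conePrism v R β) l =
      ∑ j ∈ Finset.range R, (β (l.map (coneMap v R (j + 1))) - β (l.map (coneMap v R j))) := by
    rw [h1, conePrism, ← Finset.sum_add_distrib]
    exact Finset.sum_congr rfl fun j _ => prism_homotopy _ _ β l
  rw [Finset.sum_range_sub (fun j => β (l.map (coneMap v R j)))] at h2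
  have h3 : coneMap v R R = fun _ => v := by
    funext x
    have : (R : ℝ) ≠ 0 := by exact_mod_cast hR
    simp [coneMap, div_self this]
  have h4 : coneMap v R 0 = id := by
    funext x; simp [coneMap]
  rw [h3, h4, List.map_id] at h2
  linear_combination h2

theorem conePrism_sub (v : U) (R : ℕ) (β β' : List U → k) :
    conePrism v R (fun l => β l - β' l) = fun l => conePrism v R β l - conePrism v R β' l := by
  funext l
  simp only [conePrism, prism_sub, Finset.sum_sub_distrib]

variable {p : ℕ} {γ : U → U} {v : ℕ → U} {R : ℕ}

theorem chain_sub (m : ℕ) (β β' : List U → k) :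
    chain p γ v R m (fun l => β l - β' l) = chain p γ v R m β - chain p γ v R m β' := by
  induction m generalizing β β' with
  | zero => simp [chain]
  | succ m ih => simp only [chain, conePrism_sub, tr_sub, ih]

/-- Stokes' formula. Modulo `p`, the boundary of the chain in degree `m + 1` is, up to sign, the
image of the chain in degree `m` under `tr p γ m`: the cones themselves cancel, and so do the images
of the apex, since the total coefficient of `tr` is divisible by `p`. -/
theorem chain_delta (hγ : γ^[p] = id) (hp : (p : k) = 0) (hR : R ≠ 0) (m : ℕ)
    (β : List U → k) :
    chain p γ v R (m + 1) (delta β) = -chain p γ v R m (tr p γ m β) := by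
  have cyc : ∀ m, (∀ m', m = m' + 1 → ∀ β : List U → k,
      chain p γ v R (m' + 1) (delta β) = -chain p γ v R m' (tr p γ m' β)) →
      ∀ β : List U → k, chain p γ v R m (delta (tr p γ m β)) = 0 := by
    intro m hm β
    cases m with
    | zero => simp [chain, delta, tr, hp]
    | succ m' =>
      have hz : chain p γ v R m' (fun _ => (0 : k)) = 0 := by
        have := chain_sub (p := p) (γ := γ) (v := v) (R := R) m'
          (fun _ => (0 : k)) (fun _ => (0 : k))
        simpa using this
      have h0 : tr p γ m' (tr p γ (m' + 1) β) = fun _ => 0 := by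
        funext l; exact tr_tr hγ m' β l
      rw [hm m' rfl, h0, hz, neg_zero]
  have main : ∀ m, (∀ β : List U → k, chain p γ v R m (delta (tr p γ m β)) = 0) →
      ∀ β : List U → k, chain p γ v R (m + 1) (delta β) = -chain p γ v R m (tr p γ m β) := by
    intro m hm β
    have h1 : conePrism (v (m + 1)) R (delta β) = fun l =>
        (fun l => (fun l : List U => β (l.map fun _ => v (m + 1))) l - β l) l -
          delta (conePrism (v (m + 1)) R β) l := by
      funext l; exact conePrism_homotopy _ hR β l
    have h2 : tr p γ m (fun l : List U => β (l.map fun _ => v (m + 1))) = fun _ => 0 := by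
      funext l
      simp [tr, Function.comp_def, hp]
    have h3 : tr p γ m (delta (conePrism (v (m + 1)) R β)) =
        delta (tr p γ m (conePrism (v (m + 1)) R β)) := by
      funext l; rw [delta_tr]
    rw [chain, h1, tr_sub, tr_sub, h2, h3, chain_sub, hm]
    have := chain_sub (p := p) (γ := γ) (v := v) (R := R) m (fun _ => (0 : k)) (tr p γ m β)
    have hz : chain p γ v R m (fun _ => (0 : k)) = 0 := by
      have := chain_sub (p := p) (γ := γ) (v := v) (R := R) m
        (fun _ => (0 : k)) (fun _ => (0 : k))
      simpa using this
    rw [this, hz]; ring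
  induction m generalizing β with
  | zero => exact main 0 (cyc 0 (by intro m' h; omega)) β
  | succ m ih =>
    refine main _ (cyc _ ?_) β
    intro m' h β
    obtain rfl : m = m' := by omega
    exact ih β

/-- The vertex lists of `m`-simplices that lie in `K m` and have diameter at most `e`. -/
def Good (K : ℕ → Set U) (e : ℝ) (m : ℕ) (l : List U) : Prop :=
  l.length = m + 1 ∧ (∀ a ∈ l, a ∈ K m) ∧ ∀ a ∈ l, ∀ b ∈ l, dist a b ≤ e

theorem dist_coneMap_le {D : ℝ} {w x y : U} {j i : ℕ} (hj : j ≤ R) (hR : R ≠ 0)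
    (hD : dist y w ≤ D) (hij : i = j ∨ i = j + 1 ∨ j = i + 1) :
    dist (coneMap w R j x) (coneMap w R i y) ≤ dist x y + D / R := by
  have hR' : (0 : ℝ) < R := by exact_mod_cast Nat.pos_of_ne_zero hR
  have h1 : dist (coneMap w R j x) (coneMap w R j y) ≤ dist x y := by
    unfold coneMap
    rw [AffineMap.lineMap_apply_module, AffineMap.lineMap_apply_module, dist_add_right,
      dist_smul₀]
    have h0 : (j : ℝ) / R ≤ 1 := by
      rw [div_le_one hR']; exact_mod_cast hj
    have h2 : (0 : ℝ) ≤ j / R := by positivity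
    rw [Real.norm_eq_abs, abs_of_nonneg (by linarith)]
    nlinarith [dist_nonneg (x := x) (y := y)]
  have h2 : dist (coneMap w R j y) (coneMap w R i y) ≤ D / R := by
    unfold coneMap
    rw [dist_lineMap_lineMap]
    have h3 : dist ((j : ℝ) / R) (i / R) ≤ 1 / R := by
      rw [Real.dist_eq, ← sub_div, abs_div, abs_of_pos hR']
      gcongr
      rcases hij with rfl | rfl | rfl <;> simp
    calc _ ≤ 1 / (R : ℝ) * D := by gcongr
      _ = D / R := by ring
  exact (dist_triangle _ _ _).trans (add_le_add h1 h2)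

/-- The chain in degree `m` consists of simplices in `K m` of diameter at most `m * (D / R)`. -/
theorem chain_congr {K : ℕ → Set U} {D : ℝ} (hR : R ≠ 0)
    (hγK : ∀ m, ∀ x ∈ K m, γ x ∈ K m) (hγd : ∀ x y, dist (γ x) (γ y) = dist x y)
    (hv0 : v 0 ∈ K 0)
    (hcone : ∀ m, ∀ x ∈ K m, ∀ s ∈ Set.Icc (0 : ℝ) 1,
      (AffineMap.lineMap x (v (m + 1)) s : U) ∈ K (m + 1))
    (hdiam : ∀ m, ∀ x ∈ K m, dist x (v (m + 1)) ≤ D)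
    (m : ℕ) (β β' : List U → k) (h : ∀ l, Good K (m * (D / R)) m l → β l = β' l) :
    chain p γ v R m β = chain p γ v R m β' := by
  induction m generalizing β β' with
  | zero =>
    refine h _ ⟨by simp, ?_, ?_⟩
    · simpa using hv0
    · simp
  | succ m ih =>
    simp only [chain]
    apply ih
    intro l hl
    refine tr_congr (Good K (m * (D / R)) m) ?_ m _ _ ?_ l hl
    · intro l ⟨h1, h2, h3⟩
      refine ⟨by simpa using h1, ?_, ?_⟩
      · intro a ha
        obtain ⟨x, hx, rfl⟩ := List.mem_map.1 ha
        exact hγK m x (h2 x hx)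
      · intro a ha b hb
        obtain ⟨x, hx, rfl⟩ := List.mem_map.1 ha
        obtain ⟨y, hy, rfl⟩ := List.mem_map.1 hb
        rw [hγd]; exact h3 x hx y hy
    · intro l ⟨h1, h2, h3⟩
      refine Finset.sum_congr rfl fun j hj => ?_
      have hj := Finset.mem_range.1 hj
      have hR' : (0 : ℝ) < R := by exact_mod_cast Nat.pos_of_ne_zero hR
      refine prism_congr _ _ _ _ _ fun l' hl' hmem => h l' ⟨by omega, ?_, ?_⟩
      · intro a ha
        obtain ⟨x, hx, h⟩ := hmem a ha
        rcases h with rfl | rfl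
        · refine hcone m x (h2 x hx) _ ⟨by positivity, ?_⟩
          rw [div_le_one hR']; exact_mod_cast hj.le
        · refine hcone m x (h2 x hx) _ ⟨by positivity, ?_⟩
          rw [div_le_one hR']; exact_mod_cast hj
      · intro a ha b hb
        obtain ⟨x, hx, ha⟩ := hmem a ha
        obtain ⟨y, hy, hb⟩ := hmem b hb
        have hxy := h3 x hx y hy
        have hyD := hdiam m y (h2 y hy)
        have : dist a b ≤ dist x y + D / R := by
          rcases ha with rfl | rfl <;> rcases hb with rfl | rfl
          · exact dist_coneMap_le hj.le hR hyD (by omega)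
          · exact dist_coneMap_le hj.le hR hyD (by omega)
          · exact dist_coneMap_le hj hR hyD (by omega)
          · exact dist_coneMap_le hj hR hyD (by omega)
        push_cast
        linarith

/-- The combinatorial core of the equivariant argument: there is no equivariant labelling `lab`
sending small simplices of dimension at most `N` to lists satisfying `P`, when lists satisfying `P`
have at most `N` distinct entries.

Starting with the constant cochain, cochains `z` of increasing degree on labels are produced by
writing `z = tr b` and passing to `delta b`. By Stokes' formula the value of the pulled-back cochain
on the chain only changes its sign, so it stays nonzero up to degree `N`, where every
alternating cochain vanishes on lists satisfying `P`. -/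
theorem no_labelling {V : Type*} {s : V → V} [Nontrivial k]
    {K : ℕ → Set U} {D : ℝ} (hR : R ≠ 0) (hp : (p : k) = 0)
    (hγ : γ^[p] = id) (hs : s^[p] = id)
    (hγK : ∀ m, ∀ x ∈ K m, γ x ∈ K m) (hγd : ∀ x y, dist (γ x) (γ y) = dist x y)
    (hv0 : v 0 ∈ K 0)
    (hcone : ∀ m, ∀ x ∈ K m, ∀ s ∈ Set.Icc (0 : ℝ) 1,
      (AffineMap.lineMap x (v (m + 1)) s : U) ∈ K (m + 1))
    (hdiam : ∀ m, ∀ x ∈ K m, dist x (v (m + 1)) ≤ D)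
    (P : List V → Prop) (hPsub : ∀ l l' : List V, l' ⊆ l → P l → P l')
    (hPs : ∀ l, P l → P (l.map s))
    (χ : List V → k) (hχ : ∀ l l' : List V, l.Perm l' → χ l = χ l')
    (hχ1 : ∀ l, P l → l ≠ [] → ∑ i ∈ Finset.range p, χ (l.map s^[i]) = 1)
    (N : ℕ) (hN : ∀ l : List V, P l → l.length = N + 1 → ¬ l.Nodup)
    (lab : U → V) (hlab : ∀ x ∈ K N, lab (γ x) = s (lab x))
    (hgood : ∀ m, m ≤ N → ∀ l, Good K (m * (D / R)) m l → P (l.map lab)) : False := by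
  have hmono : ∀ m m', m ≤ m' → K m ⊆ K m' := by
    intro m m' h
    induction h with
    | refl => exact subset_rfl
    | step _ ih =>
      intro x hx
      simpa using hcone _ x (ih hx) 0 (by simp)
  have key : ∀ m, m ≤ N → ∃ z : List V → k, Alt z ∧ z [] = 0 ∧
      (∀ l, P l → tr p s (m + 1) z l = 0) ∧ (∀ l, P l → delta z l = 0) ∧
      chain p γ v R m (fun l => z (l.map lab)) ≠ 0 := by
    intro m
    induction m with
    | zero =>
      intro _
      refine ⟨fun l => if l.length = 1 then 1 else 0, ⟨?_, ?_⟩, by simp, ?_, ?_, ?_⟩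
      · intro l₁ x l₂
        have h : ¬ (l₁ ++ x :: x :: l₂).length = 1 := by simp; omega
        simp only [h, if_false]
      · intro l₁ x y l₂
        have h : ∀ x y, ¬ (l₁ ++ x :: y :: l₂).length = 1 := by intro x y; simp; omega
        simp only [h, if_false, neg_zero]
      · intro l _; simp [tr]
      · intro l _
        rcases l with _ | ⟨x, _ | ⟨y, l⟩⟩
        · simp [delta]
        · simp [delta]
        · have h0 : (fun l' : List V => if (x :: y :: l').length = 1 then (1 : k) else 0) =
              fun _ => 0 := by funext l'; simp
          simp only [delta, h0, delta_zero]
          simp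
      · simp [chain]
    | succ m ih =>
      intro hm
      obtain ⟨z, hz, hz0, hzT, hzd, hzc⟩ := ih (by omega)
      obtain ⟨b, hb, hb0, hbT⟩ := exists_tr_eq hs P χ hχ hχ1 hPs m z hz hz0 hzT
      refine ⟨delta b, hb.delta, rfl, ?_, ?_, ?_⟩
      · intro l hl
        have h1 : tr p s (m + 1 + 1) (delta b) l = tr p s m (delta b) l := by
          simp [tr, Nat.even_add_one]
        rw [h1, ← delta_tr, delta_congr P hPsub _ z hbT l hl, hzd l hl]
      · intro l _; exact delta_delta b l
      · have h1 : (fun l : List U => delta b (l.map lab)) =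
            delta (fun l => b (l.map lab)) := by
          funext l; rw [delta_map]
        rw [h1, chain_delta hγ hp hR, neg_ne_zero]
        have h2 : chain p γ v R m (tr p γ m fun l => b (l.map lab)) =
            chain p γ v R m (fun l => z (l.map lab)) := by
          refine chain_congr hR hγK hγd hv0 hcone hdiam m _ _ fun l hl => ?_
          rw [← hbT _ (hgood m (by omega) l hl)]
          have hK : ∀ x ∈ l, x ∈ K N := fun x hx => hmono m N (by omega) (hl.2.1 x hx)
          have h3 : ∀ i, (l.map γ^[i]).map lab = (l.map lab).map s^[i] := by
            intro i
            rw [List.map_map, List.map_map]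
            refine List.map_congr_left fun x hx => ?_
            have : ∀ i, γ^[i] x ∈ K N ∧ lab (γ^[i] x) = s^[i] (lab x) := by
              intro i
              induction i with
              | zero => exact ⟨hK x hx, rfl⟩
              | succ i ih =>
                rw [Function.iterate_succ_apply', Function.iterate_succ_apply']
                exact ⟨hγK _ _ ih.1, by rw [hlab _ ih.1, ih.2]⟩
            exact (this i).2
          have h4 := h3 1
          simp only [Function.iterate_one] at h4
          simp only [tr, h3, h4]
        rw [h2]; exact hzc
  obtain ⟨z, hz, _, _, _, hc⟩ := key N le_rfl
  apply hc
  have h0 : chain p γ v R N (fun _ => (0 : k)) = 0 := by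
    have := chain_sub (p := p) (γ := γ) (v := v) (R := R) N (fun _ => (0 : k)) (fun _ => (0 : k))
    simpa using this
  rw [← h0]
  refine chain_congr hR hγK hγd hv0 hcone hdiam N _ _ fun l hl => ?_
  exact hz.eq_zero (hN _ (hgood N le_rfl l hl) (by simpa using hl.1))

end Chains
end EquiPart

/-! ### An approximate Borsuk–Ulam theorem for cyclic groups of prime order -/

namespace EquiPart

section Labels

variable {p : ℕ} [Fact p.Prime]

/-- The mean of a set of residues. It commutes with translations, provided that the set is neither
empty nor everything, so that its cardinality is invertible modulo `p`. -/
def tau (A : Finset (ZMod p)) : ZMod p := (∑ a ∈ A, a) / (A.card : ZMod p)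

theorem tau_image_add {A : Finset (ZMod p)} (h1 : A.Nonempty) (h2 : A ≠ Finset.univ)
    (i : ZMod p) : tau (A.image (· + i)) = tau A + i := by
  have hinj : Function.Injective (· + i : ZMod p → ZMod p) := add_left_injective i
  have hcard : (A.card : ZMod p) ≠ 0 := by
    rw [Ne, ZMod.natCast_eq_zero_iff]
    intro hd
    have h3 : A.card < p := by
      have := Finset.card_lt_univ_of_notMem
        (Classical.choose_spec (by simpa [Finset.ext_iff] using h2 : ∃ x, x ∉ A))
      rwa [ZMod.card] at this
    have := Nat.le_of_dvd h1.card_pos hd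
    omega
  unfold tau
  rw [Finset.card_image_of_injective _ hinj, Finset.sum_image (fun _ _ _ _ h => hinj h),
    Finset.sum_add_distrib, Finset.sum_const, nsmul_eq_mul, add_div, mul_div_cancel_left₀ _ hcard]

open Classical in
/-- An arbitrary element of `B`, depending on `B` only, with a junk value if `B` is empty. -/
noncomputable def pick {α : Type*} [Inhabited α] (B : Finset α) : α :=
  if h : B.Nonempty then h.choose else default

theorem pick_mem {α : Type*} [Inhabited α] {B : Finset α} (h : B.Nonempty) : pick B ∈ B := by
  unfold pick; rw [dif_pos h]; exact h.choose_spec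

/-- An element of `A` chosen compatibly with translations: `A` is translated to mean zero first. -/
noncomputable def rho (A : Finset (ZMod p)) : ZMod p := tau A + pick (A.image (· - tau A))

theorem rho_mem {A : Finset (ZMod p)} (h : A.Nonempty) : rho A ∈ A := by
  have := pick_mem (h.image (· - tau A))
  obtain ⟨a, ha, h⟩ := Finset.mem_image.1 this
  have : rho A = a := by rw [rho, ← h]; ring
  rwa [this]

theorem rho_image_add {A : Finset (ZMod p)} (h1 : A.Nonempty) (h2 : A ≠ Finset.univ)
    (i : ZMod p) : rho (A.image (· + i)) = rho A + i := by
  have : (A.image (· + i)).image (· - tau (A.image (· + i))) = A.image (· - tau A) := by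
    rw [tau_image_add h1 h2, Finset.image_image]
    congr 1
    funext a; simp
  rw [rho, this, tau_image_add h1 h2, rho]; ring

variable {ι : Type*}

/-- The generator of the cyclic group acting on labels by translation of the first coordinate. -/
def shift (x : ZMod p × ι) : ZMod p × ι := (x.1 + 1, x.2)

theorem shift_iterate (i : ℕ) (x : ZMod p × ι) : shift^[i] x = (x.1 + i, x.2) := by
  induction i with
  | zero => simp
  | succ i ih => rw [Function.iterate_succ_apply', ih]; simp [shift, add_assoc]

/-- Admissible lists of labels: no column `ZMod p × {c}` is contained in the list. -/
def Adm (l : List (ZMod p × ι)) : Prop := ∀ c, ∃ g, (g, c) ∉ l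

theorem Adm.shift {l : List (ZMod p × ι)} (h : Adm l) : Adm (l.map shift) := by
  intro c
  obtain ⟨g, hg⟩ := h c
  refine ⟨g + 1, fun hm => hg ?_⟩
  obtain ⟨⟨a, b⟩, hx, hxe⟩ := List.mem_map.1 hm
  simp only [EquiPart.shift, Prod.mk.injEq, add_left_inj] at hxe
  rwa [← hxe.1, ← hxe.2]

variable [DecidableEq ι]

/-- The residues that occur in the list in column `c`. -/
def column (l : List (ZMod p × ι)) (c : ι) : Finset (ZMod p) :=
  Finset.univ.filter fun g => (g, c) ∈ l

/-- The weight of a list: `1` if a chosen nonempty column has mean zero, and `0` otherwise. The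
column is chosen from the set of occurring second coordinates, which translations preserve. -/
noncomputable def chi (k : Type*) [CommRing k] [Inhabited ι] (l : List (ZMod p × ι)) : k :=
  if tau (column l (pick (l.map Prod.snd).toFinset)) = 0 then 1 else 0

theorem chi_perm (k : Type*) [CommRing k] [Inhabited ι] (l l' : List (ZMod p × ι))
    (h : l.Perm l') : chi k l = chi k l' := by
  have h1 : (l.map Prod.snd).toFinset = (l'.map Prod.snd).toFinset :=
    List.toFinset_eq_of_perm _ _ (h.map _)
  have h2 : ∀ c, column l c = column l' c := by
    intro c; ext g; simp [column, h.mem_iff]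
  simp only [chi, h1, h2]

/-- Exactly one of the `p` translates of a nonempty admissible list has weight `1`. -/
theorem chi_sum (k : Type*) [CommRing k] [Inhabited ι] (l : List (ZMod p × ι))
    (h : Adm l) (h0 : l ≠ []) : ∑ i ∈ Finset.range p, chi k (l.map shift^[i]) = 1 := by
  set c := pick (l.map Prod.snd).toFinset with hc
  have hcm : c ∈ (l.map Prod.snd).toFinset := by
    apply pick_mem
    rw [List.toFinset_nonempty_iff]; simpa using h0
  have h1 : (column l c).Nonempty := by
    simp only [List.mem_toFinset, List.mem_map, Prod.exists, exists_eq_right] at hcm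
    obtain ⟨g, hg⟩ := hcm
    exact ⟨g, by simpa [column] using hg⟩
  have h2 : column l c ≠ Finset.univ := by
    obtain ⟨g, hg⟩ := h c
    intro he
    have := Finset.mem_univ g
    rw [← he] at this
    exact hg (by simpa [column] using this)
  have h3 : ∀ i : ℕ, chi k (l.map shift^[i]) = if tau (column l c) + i = 0 then (1 : k) else 0 := by
    intro i
    have e1 : ((l.map shift^[i]).map Prod.snd).toFinset = (l.map Prod.snd).toFinset := by
      rw [List.map_map]
      congr 2
      funext x; simp [shift_iterate]
    have e2 : column (l.map shift^[i]) c = (column l c).image (· + (i : ZMod p)) := by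
      ext g
      simp only [column, Finset.mem_filter, Finset.mem_univ, true_and, List.mem_map,
        Finset.mem_image, shift_iterate]
      constructor
      · rintro ⟨⟨a, b⟩, hab, he⟩
        simp only [Prod.mk.injEq] at he
        obtain ⟨h1, rfl⟩ := he
        exact ⟨a, hab, h1⟩
      · rintro ⟨a, ha, rfl⟩
        exact ⟨(a, c), ha, rfl⟩
    unfold chi
    rw [e1, ← hc, e2, tau_image_add h1 h2]
  simp only [h3]
  have h4 : ∀ i ∈ Finset.range p, (if tau (column l c) + (i : ZMod p) = 0 then (1 : k) else 0) =
      if i = (-tau (column l c)).val then 1 else 0 := by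
    intro i hi
    have hi := Finset.mem_range.1 hi
    congr 1
    rw [add_comm, add_eq_zero_iff_eq_neg]
    apply propext
    constructor
    · intro h; rw [← h, ZMod.val_natCast_of_lt hi]
    · intro h; rw [h, ZMod.natCast_zmod_val]
  rw [Finset.sum_congr rfl h4, Finset.sum_ite_eq' (Finset.range p),
    if_pos (Finset.mem_range.2 (ZMod.val_lt _))]

/-- Distinct entries of an admissible list number at most `p - 1` per column. -/
theorem Adm.not_nodup [Fintype ι] {l : List (ZMod p × ι)} (h : Adm l)
    (hl : l.length = Fintype.card ι * (p - 1) + 1) : ¬ l.Nodup := by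
  intro hn
  have h1 : l.toFinset.card = l.length := List.toFinset_card_of_nodup hn
  have h2 := Finset.card_eq_sum_card_fiberwise (s := l.toFinset) (t := Finset.univ)
    (f := Prod.snd) (fun _ _ => by simp)
  have h3 : ∀ c ∈ (Finset.univ : Finset ι),
      (l.toFinset.filter fun x => x.2 = c).card ≤ p - 1 := by
    intro c _
    obtain ⟨g, hg⟩ := h c
    have : (Finset.univ.erase g : Finset (ZMod p)).card = p - 1 := by
      rw [Finset.card_erase_of_mem (Finset.mem_univ _), Finset.card_univ, ZMod.card]
    rw [← this]
    refine Finset.card_le_card_of_injOn Prod.fst ?_ ?_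
    · rintro ⟨a, b⟩ hx
      simp only [Finset.coe_filter, List.mem_toFinset, Set.mem_ofPred_eq] at hx
      simp only [Finset.coe_erase, Finset.coe_univ, Set.mem_sdiff, Set.mem_univ,
        Set.mem_singleton_iff, true_and]
      rintro rfl
      exact hg (hx.2 ▸ hx.1)
    · rintro ⟨a, b⟩ hx ⟨a', b'⟩ hx' he
      simp only [Finset.coe_filter, List.mem_toFinset, Set.mem_ofPred_eq] at hx hx'
      simp only at he
      rw [he, hx.2, hx'.2]
  have h4 := Finset.sum_le_sum h3
  rw [← h2, h1, hl, Finset.sum_const, Finset.card_univ, smul_eq_mul] at h4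
  omega

/-- Approximate equivariant Borsuk–Ulam theorem: a continuous equivariant map `F` with values in
`p`-tuples of vectors is somewhere almost constant in the index `g`.

Otherwise label `x` by `(g, c)`, where `c` is a coordinate in which `F x` varies most and `g` is a
place where `F x c` is maximal. If nearby points carried all labels of one column `c`, then all
`F x c g` would be almost maximal, contradicting the variation; so small simplices have admissible
labels. -/
theorem exists_approx_balanced [Fintype ι] [Nonempty ι] {U : Type*} [NormedAddCommGroup U]
    [NormedSpace ℝ U] {γ : U → U} {v : ℕ → U} {K : ℕ → Set U} {D : ℝ}
    (hγ : γ^[p] = id)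
    (hγK : ∀ m, ∀ x ∈ K m, γ x ∈ K m) (hγd : ∀ x y, dist (γ x) (γ y) = dist x y)
    (hv0 : v 0 ∈ K 0)
    (hcone : ∀ m, ∀ x ∈ K m, ∀ s ∈ Set.Icc (0 : ℝ) 1,
      (AffineMap.lineMap x (v (m + 1)) s : U) ∈ K (m + 1))
    (hdiam : ∀ m, ∀ x ∈ K m, dist x (v (m + 1)) ≤ D)
    {Kc : Set U} (hKc : IsCompact Kc) (hsub : ∀ m ≤ Fintype.card ι * (p - 1), K m ⊆ Kc)
    (F : U → ι → ZMod p → ℝ) (hF : Continuous F)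
    (hFγ : ∀ x c g, F (γ x) c g = F x c (g - 1)) {η : ℝ} (hη : 0 < η) :
    ∃ x ∈ Kc, ∀ c g h, |F x c g - F x c h| ≤ η := by
  classical
  by_contra! hcon
  have : Inhabited ι := Classical.inhabited_of_nonempty inferInstance
  have hp0 : (0 : ℝ) < p := by exact_mod_cast (Fact.out : p.Prime).pos
  -- `W x c` measures how far `F x c` is from being constant
  set W : U → ι → ℝ := fun x c => ∑ g, ∑ h, |F x c g - F x c h| with hW
  have hle : ∀ x c g h, |F x c g - F x c h| ≤ W x c := by
    intro x c g h
    refine le_trans ?_ (Finset.single_le_sum (f := fun g => ∑ h, |F x c g - F x c h|)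
      (fun g _ => Finset.sum_nonneg fun h _ => abs_nonneg _) (Finset.mem_univ g))
    exact Finset.single_le_sum (f := fun h => |F x c g - F x c h|)
      (fun h _ => abs_nonneg _) (Finset.mem_univ h)
  have hWγ : ∀ x, W (γ x) = W x := by
    intro x
    funext c
    simp only [hW, hFγ]
    have e : ∀ f : ZMod p → ℝ, ∑ g, f (g - 1) = ∑ g, f g := fun f =>
      Equiv.sum_comp (Equiv.subRight (1 : ZMod p)) f
    rw [e fun g => ∑ h, |F x c g - F x c (h - 1)|]
    exact Finset.sum_congr rfl fun g _ => e fun h => |F x c g - F x c h|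
  have hex : ∀ w : ι → ℝ, ∃ c, ∀ c', w c' ≤ w c := fun w => Finite.exists_max w
  choose am ham using hex
  set A : U → Finset (ZMod p) := fun x =>
    Finset.univ.filter fun g => ∀ h, F x (am (W x)) h ≤ F x (am (W x)) g with hA
  have hAne : ∀ x, (A x).Nonempty := by
    intro x
    obtain ⟨g, hg⟩ := Finite.exists_max (F x (am (W x)))
    exact ⟨g, by simpa [hA] using hg⟩
  have hsmall : ∀ x ∈ Kc, η < W x (am (W x)) := by
    intro x hx
    obtain ⟨c, g, h, hlt⟩ := hcon x hx
    exact hlt.trans_le ((hle x c g h).trans (ham (W x) c))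
  have hAuniv : ∀ x ∈ Kc, A x ≠ Finset.univ := by
    intro x hx he
    have h1 : ∀ g h, F x (am (W x)) h ≤ F x (am (W x)) g := by
      intro g
      have := Finset.mem_univ g
      rw [← he] at this
      simpa [hA] using this
    have h2 : W x (am (W x)) = 0 := by
      simp only [hW]
      refine Finset.sum_eq_zero fun g _ => Finset.sum_eq_zero fun h _ => ?_
      rw [abs_eq_zero, sub_eq_zero]
      exact le_antisymm (h1 _ _) (h1 _ _)
    have := hsmall x hx
    linarith
  have hAγ : ∀ x, A (γ x) = (A x).image (· + 1) := by
    intro x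
    ext g
    simp only [hA, hWγ, hFγ, Finset.mem_filter, Finset.mem_univ, true_and, Finset.mem_image]
    constructor
    · intro h
      exact ⟨g - 1, fun h' => by simpa using h (h' + 1), by ring⟩
    · rintro ⟨a, ha, rfl⟩ h'
      simpa using ha (h' - 1)
  set N := Fintype.card ι * (p - 1) with hN
  set ε := η / (2 * p ^ 2) with hε
  have hεpos : 0 < ε := by positivity
  obtain ⟨δ, hδ, hunif⟩ := Metric.uniformContinuousOn_iff.1
    (hKc.uniformContinuousOn_of_continuous hF.continuousOn) ε hεpos
  have hD : 0 ≤ D := dist_nonneg.trans (hdiam 0 _ hv0)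
  -- subdivide finely enough for all simplices of the chain to have diameter less than `δ`
  obtain ⟨R, hR⟩ := exists_nat_gt (N * D / δ)
  have hR0 : (0 : ℝ) < R := lt_of_le_of_lt (by positivity) hR
  have hRn : R ≠ 0 := by rintro rfl; simp at hR0
  refine no_labelling (k := ZMod p) (s := shift (p := p) (ι := ι)) (R := R) hRn (by simp) hγ ?_
    hγK hγd hv0 hcone hdiam Adm (fun l l' hs hl c => ?_) (fun l hl => hl.shift)
    (chi (ZMod p)) (chi_perm (ZMod p)) (chi_sum (ZMod p)) N
    (fun l hl hlen => hl.not_nodup hlen) (fun x => (rho (A x), am (W x))) ?_ ?_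
  · funext x; rw [shift_iterate]; simp
  · obtain ⟨g, hg⟩ := hl c
    exact ⟨g, fun h => hg (hs h)⟩
  · intro x hx
    simp only [shift, hWγ, hAγ]
    rw [rho_image_add (hAne x) (hAuniv x (hsub N le_rfl hx))]
  · intro m hm l ⟨hlen, hlK, hld⟩ c
    by_contra! hall
    have : ∀ g, ∃ x ∈ l, rho (A x) = g ∧ am (W x) = c := by
      intro g
      simpa using hall g
    choose X hXl hXg hXc using this
    have hlδ : ∀ a ∈ l, ∀ b ∈ l, dist a b < δ := by
      intro a ha b hb
      refine (hld a ha b hb).trans_lt ?_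
      have hmN : (m : ℝ) ≤ N := by exact_mod_cast hm
      have hNR : N * (D / R) < δ := by
        rw [div_lt_iff₀ hδ] at hR
        rw [← mul_div_assoc, div_lt_iff₀ hR0]; linarith
      refine lt_of_le_of_lt ?_ hNR
      gcongr
    have hXK : ∀ g, X g ∈ Kc := fun g => hsub m hm (hlK _ (hXl g))
    have hclose : ∀ g h c', |F (X g) c' h - F (X 0) c' h| ≤ ε := by
      intro g h c'
      have h1 := hunif (X g) (hXK g) (X 0) (hXK 0) (hlδ _ (hXl g) _ (hXl 0))
      have h2 := (dist_le_pi_dist (F (X g)) (F (X 0)) c').trans h1.le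
      have h3 := (dist_le_pi_dist (F (X g) c') (F (X 0) c') h).trans h2
      rwa [Real.dist_eq] at h3
    have hmax : ∀ g h, F (X g) c h ≤ F (X g) c g := by
      intro g h
      have h1 := rho_mem (hAne (X g))
      rw [hXg g] at h1
      simp only [hA, Finset.mem_filter, Finset.mem_univ, true_and, hXc g] at h1
      exact h1 h
    have hdiff : ∀ g h, F (X 0) c h - F (X 0) c g ≤ 2 * ε := by
      intro g h
      have h1 := abs_le.1 (hclose g h c)
      have h2 := abs_le.1 (hclose g g c)
      have h3 := hmax g h
      linarith [h1.1, h1.2, h2.1, h2.2]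
    have hWle : W (X 0) c ≤ η := by
      have h1 : ∀ g ∈ (Finset.univ : Finset (ZMod p)),
          ∑ h, |F (X 0) c g - F (X 0) c h| ≤ p * (2 * ε) := by
        intro g _
        have := Finset.sum_le_card_nsmul (Finset.univ : Finset (ZMod p))
          (fun h => |F (X 0) c g - F (X 0) c h|) (2 * ε)
          (fun h _ => abs_le.2 ⟨by linarith [hdiff g h], hdiff h g⟩)
        simpa [ZMod.card] using this
      have h2 := Finset.sum_le_card_nsmul (Finset.univ : Finset (ZMod p)) _ _ h1
      have h3 : (p : ℝ) * (p * (2 * ε)) = η := by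
        rw [hε]; field_simp
      simp only [Finset.card_univ, ZMod.card, nsmul_eq_mul, h3] at h2
      exact h2
    have := hsmall (X 0) (hXK 0)
    rw [hXc 0] at this
    linarith

end Labels
end EquiPart

/-! ### Configurations of affine functions -/

namespace EquiPart

section Config

variable (n p : ℕ)

/-- Configurations: a vector of `n + 1` coefficients, hence an affine function on `ℝⁿ`, for each
element of `ZMod p`. -/
abbrev Cfg := ZMod p → Fin (n + 1) → ℝ

variable {n p}

/-- The action of the generator of `ZMod p` on configurations. -/
def rot (f : Cfg n p) : Cfg n p := fun g => f (g - 1)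

/-- The coefficient that the `i`-th apex lives in: each coefficient receives `p - 1` consecutive
apices. -/
def blk (n p i : ℕ) : Fin (n + 1) := Fin.ofNat (n + 1) (i / (p - 1))

/-- The number of apices among the first `m + 1` that live in the coefficient `c`. -/
def cap (n p m : ℕ) (c : Fin (n + 1)) : ℕ :=
  ((Finset.range (m + 1)).filter fun i => blk n p i = c).card

/-- The `m`-th apex: the configuration with single entry `1`, at index `0` and coefficient
`blk n p m`. -/
noncomputable def apex (n p m : ℕ) : Cfg n p := Pi.single 0 (Pi.single (blk n p m) 1)

variable [Fact p.Prime]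

/-- Nonnegative configurations of total sum `1` in which the coefficient `c` is nonzero for at most
`cap n p m c` indices. It is closed under rotations, and the cone over it with apex `m + 1` lies in
the next stage. -/
def stage (n p : ℕ) [Fact p.Prime] (m : ℕ) : Set (Cfg n p) :=
  {f | (∀ g c, 0 ≤ f g c) ∧ ∑ g, ∑ c, f g c = 1 ∧
    ∀ c, (Finset.univ.filter fun g => f g c ≠ 0).card ≤ cap n p m c}

/-- Nonnegative configurations of total sum `1` in which each coefficient vanishes for some index.
This compact set contains the first `n * (p - 1) + 1` stages, and no constant configuration. -/
def core (n p : ℕ) [Fact p.Prime] : Set (Cfg n p) :=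
  {f | (∀ g c, 0 ≤ f g c) ∧ ∑ g, ∑ c, f g c = 1 ∧ ∀ c, ∃ g, f g c = 0}

theorem entry_le_one {f : Cfg n p} (h0 : ∀ g c, 0 ≤ f g c) (h1 : ∑ g, ∑ c, f g c = 1)
    (g : ZMod p) (c : Fin (n + 1)) : f g c ≤ 1 := by
  rw [← h1]
  refine le_trans ?_ (Finset.single_le_sum (f := fun g => ∑ c, f g c)
      (fun g _ => Finset.sum_nonneg fun h _ => h0 _ _) (Finset.mem_univ g))
  exact Finset.single_le_sum (f := fun c => f g c) (fun h _ => h0 _ _) (Finset.mem_univ c)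

theorem isCompact_core : IsCompact (core n p) := by
  refine IsCompact.of_isClosed_subset (isCompact_Icc (a := (0 : Cfg n p)) (b := fun _ _ => 1))
    ?_ ?_
  · have h1 : IsClosed {f : Cfg n p | ∀ g c, 0 ≤ f g c} := by
      simp only [Set.ofPred_forall]
      exact isClosed_iInter fun g => isClosed_iInter fun c =>
        isClosed_le continuous_const (by fun_prop)
    have h2 : IsClosed {f : Cfg n p | ∑ g, ∑ c, f g c = 1} :=
      isClosed_eq (by fun_prop) continuous_const
    have h3 : IsClosed {f : Cfg n p | ∀ c, ∃ g, f g c = 0} := by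
      simp only [Set.ofPred_forall, Set.ofPred_exists]
      exact isClosed_iInter fun c => isClosed_iUnion_of_finite fun g =>
        isClosed_eq (by fun_prop) continuous_const
    exact h1.inter (h2.inter h3)
  · rintro f ⟨h0, h1, -⟩
    exact ⟨fun g c => h0 g c, fun g c => entry_le_one h0 h1 g c⟩

theorem core_not_const {f : Cfg n p} (hf : f ∈ core n p) : ∃ g h, f g ≠ f h := by
  by_contra! hcon
  obtain ⟨-, h1, h2⟩ := hf
  have : ∀ g c, f g c = 0 := by
    intro g c
    obtain ⟨h, hh⟩ := h2 c
    rw [hcon g h, hh]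
  simp [this] at h1

theorem cap_le (c : Fin (n + 1)) {m : ℕ} (hm : m ≤ n * (p - 1)) : cap n p m c ≤ p - 1 := by
  have hp : 0 < p - 1 := by have := (Fact.out : p.Prime).two_le; omega
  have : ((Finset.range (m + 1)).filter fun i => blk n p i = c) ⊆
      Finset.Ico (c.val * (p - 1)) (c.val * (p - 1) + (p - 1)) := by
    intro i hi
    simp only [Finset.mem_filter, Finset.mem_range] at hi
    obtain ⟨h1, h2⟩ := hi
    have h3 : i / (p - 1) ≤ n := by
      calc i / (p - 1) ≤ (n * (p - 1)) / (p - 1) := Nat.div_le_div_right (by omega)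
        _ = n := Nat.mul_div_cancel _ hp
    have h4 : i / (p - 1) = c.val := by
      rw [← h2, blk, Fin.val_ofNat, Nat.mod_eq_of_lt (by omega)]
    rw [← h4, Finset.mem_Ico]
    constructor
    · exact Nat.div_mul_le_self _ _
    · exact Nat.lt_div_mul_add hp
  have := Finset.card_le_card this
  rw [Nat.card_Ico] at this
  unfold cap
  omega

theorem stage_subset_core {m : ℕ} (hm : m ≤ n * (p - 1)) : stage n p m ⊆ core n p := by
  rintro f ⟨h0, h1, h2⟩
  refine ⟨h0, h1, fun c => ?_⟩
  by_contra! hcon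
  have := (h2 c).trans (cap_le c hm)
  rw [Finset.filter_true_of_mem (fun g _ => hcon g), Finset.card_univ, ZMod.card] at this
  have := (Fact.out : p.Prime).two_le
  omega

theorem rot_iterate (i : ℕ) (f : Cfg n p) : rot^[i] f = fun g => f (g - i) := by
  induction i with
  | zero => simp
  | succ i ih =>
    rw [Function.iterate_succ_apply', ih]
    funext g
    simp only [rot]
    congr 1
    push_cast; ring

theorem dist_rot (x y : Cfg n p) : dist (rot x) (rot y) = dist x y := by
  apply le_antisymm
  · exact (dist_pi_le_iff dist_nonneg).2 fun g => dist_le_pi_dist x y (g - 1)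
  · refine (dist_pi_le_iff dist_nonneg).2 fun g => ?_
    simpa [rot] using dist_le_pi_dist (rot x) (rot y) (g + 1)

theorem rot_mem_stage (m : ℕ) (f : Cfg n p) (hf : f ∈ stage n p m) : rot f ∈ stage n p m := by
  obtain ⟨h0, h1, h2⟩ := hf
  refine ⟨fun g c => h0 _ _, ?_, fun c => ?_⟩
  · rw [← h1]
    exact Equiv.sum_comp (Equiv.subRight (1 : ZMod p)) (fun g => ∑ c, f g c)
  · refine le_trans ?_ (h2 c)
    refine Finset.card_le_card_of_injOn (· - 1) ?_ (fun _ _ _ _ h => sub_left_injective h)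
    intro g hg
    have hg' := (Finset.mem_filter.1 (Finset.mem_coe.1 hg)).2
    exact Finset.mem_coe.2 (Finset.mem_filter.2 ⟨Finset.mem_univ _, hg'⟩)

theorem apex_nonneg (m : ℕ) (g : ZMod p) (c : Fin (n + 1)) : 0 ≤ apex n p m g c := by
  unfold apex
  by_cases h : g = 0
  · subst h
    by_cases h' : c = blk n p m
    · subst h'; simp
    · simp [h']
  · simp [h]

theorem apex_sum (m : ℕ) : ∑ g, ∑ c, apex n p m g c = 1 := by
  unfold apex
  rw [Finset.sum_eq_single 0 (by intro g _ hg; simp [hg]) (by simp)]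
  simp

theorem apex_ne {m : ℕ} {g : ZMod p} {c : Fin (n + 1)} (h : apex n p m g c ≠ 0) :
    g = 0 ∧ blk n p m = c := by
  unfold apex at h
  by_cases hg : g = 0
  · subst hg
    refine ⟨rfl, ?_⟩
    by_contra h'
    exact h (by simp [Ne.symm h'])
  · simp [hg] at h

theorem apex_zero_mem : apex n p 0 ∈ stage n p 0 := by
  refine ⟨apex_nonneg 0, apex_sum 0, fun c => ?_⟩
  by_cases hc : blk n p 0 = c
  · have : cap n p 0 c = 1 := by simp [cap, Finset.filter_singleton, hc]
    rw [this]
    refine Finset.card_le_one.2 ?_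
    intro a ha b hb
    simp only [Finset.mem_filter, Finset.mem_univ, true_and] at ha hb
    rw [(apex_ne ha).1, (apex_ne hb).1]
  · rw [Finset.filter_false_of_mem]
    · simp
    · intro g _ h; exact hc (apex_ne h).2

theorem cone_mem_stage (m : ℕ) (f : Cfg n p) (hf : f ∈ stage n p m) (s : ℝ)
    (hs : s ∈ Set.Icc (0 : ℝ) 1) :
    (AffineMap.lineMap f (apex n p (m + 1)) s : Cfg n p) ∈ stage n p (m + 1) := by
  obtain ⟨h0, h1, h2⟩ := hf
  have e : ∀ g c, (AffineMap.lineMap f (apex n p (m + 1)) s : Cfg n p) g c =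
      (1 - s) * f g c + s * apex n p (m + 1) g c := by
    intro g c
    rw [AffineMap.lineMap_apply_module]; rfl
  refine ⟨fun g c => ?_, ?_, fun c => ?_⟩
  · rw [e]
    have := apex_nonneg (m + 1) g c
    have := h0 g c
    have := hs.1
    have := sub_nonneg.2 hs.2
    positivity
  · simp only [e, Finset.sum_add_distrib, ← Finset.mul_sum, h1, apex_sum]; ring
  · have hcap : cap n p (m + 1) c = cap n p m c + if blk n p (m + 1) = c then 1 else 0 := by
      unfold cap
      rw [Finset.range_add_one (n := m + 1), Finset.filter_insert]
      split_ifs with h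
      · rw [Finset.card_insert_of_notMem (by simp)]
      · rfl
    simp only [e]
    rw [hcap]
    split_ifs with h
    · refine le_trans (Finset.card_le_card (t := insert 0 (Finset.univ.filter fun g => f g c ≠ 0))
        ?_) ((Finset.card_insert_le _ _).trans (by simpa using h2 c))
      intro g hg
      simp only [Finset.mem_filter, Finset.mem_univ, true_and, Finset.mem_insert] at hg ⊢
      by_contra! hcon
      have h3 : apex n p (m + 1) g c = 0 := by
        by_contra h'; exact hcon.1 (apex_ne h').1
      exact hg (by simp [h3, hcon.2])
    · refine le_trans (Finset.card_le_card ?_) (h2 c)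
      intro g hg
      simp only [Finset.mem_filter, Finset.mem_univ, true_and] at hg ⊢
      intro hcon
      have h3 : apex n p (m + 1) g c = 0 := by
        by_contra h'; exact h (apex_ne h').2
      exact hg (by simp [h3, hcon])

theorem dist_apex_le (m : ℕ) (f : Cfg n p) (hf : f ∈ stage n p m) :
    dist f (apex n p (m + 1)) ≤ 1 := by
  refine (dist_pi_le_iff zero_le_one).2 fun g => (dist_pi_le_iff zero_le_one).2 fun c => ?_
  have h1 := hf.1 g c
  have h2 := entry_le_one hf.1 hf.2.1 g c
  have h3 := apex_nonneg (m + 1) g c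
  have h4 := entry_le_one (apex_nonneg (n := n) (p := p) (m + 1)) (apex_sum (m + 1)) g c
  rw [Real.dist_eq, abs_le]
  constructor <;> linarith

/-- The approximate Borsuk–Ulam theorem on the space `core n p` of configurations. -/
theorem exists_config (hn : 1 ≤ n) (F : Cfg n p → Fin n → ZMod p → ℝ) (hF : Continuous F)
    (hFγ : ∀ x c g, F (rot x) c g = F x c (g - 1)) {η : ℝ} (hη : 0 < η) :
    ∃ x ∈ core n p, ∀ c g h, |F x c g - F x c h| ≤ η := by
  have : Nonempty (Fin n) := ⟨⟨0, hn⟩⟩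
  refine exists_approx_balanced (γ := rot) (v := apex n p) (K := stage n p) (D := 1) ?_
    rot_mem_stage dist_rot apex_zero_mem cone_mem_stage dist_apex_le isCompact_core
    (fun m hm => stage_subset_core (by simpa using hm)) F hF hFγ hη
  funext f
  rw [rot_iterate]; simp

end Config
end EquiPart

/-! ### Hyperplanes and null sets -/

namespace EquiPart

section Affine

variable {n : ℕ}

/-- The affine function on `ℝⁿ` whose coefficients are the first `n` entries of `a` and whose
constant term is the last entry. -/
def aff (a : Fin (n + 1) → ℝ) (x : EuclideanSpace ℝ (Fin n)) : ℝ :=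
  a (Fin.last n) + ∑ i : Fin n, a i.castSucc * x i

theorem continuous_aff : Continuous fun z : (Fin (n + 1) → ℝ) × EuclideanSpace ℝ (Fin n) =>
    aff z.1 z.2 := by
  unfold aff; fun_prop

theorem continuous_aff_right (a : Fin (n + 1) → ℝ) : Continuous (aff a) := by
  unfold aff; fun_prop

theorem continuous_aff_left (x : EuclideanSpace ℝ (Fin n)) : Continuous fun a => aff a x := by
  unfold aff; fun_prop

theorem aff_sub (a b : Fin (n + 1) → ℝ) (x : EuclideanSpace ℝ (Fin n)) :
    aff (a - b) x = aff a x - aff b x := by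
  simp only [aff, Pi.sub_apply, sub_mul, Finset.sum_sub_distrib]; ring

theorem aff_comb (a : Fin (n + 1) → ℝ) (x y : EuclideanSpace ℝ (Fin n)) {s t : ℝ}
    (h : s + t = 1) : aff a (s • x + t • y) = s * aff a x + t * aff a y := by
  have hs : s = 1 - t := by linarith
  subst hs
  simp only [aff, PiLp.add_apply, PiLp.smul_apply, smul_eq_mul, mul_add, Finset.mul_sum,
    Finset.sum_add_distrib]
  have e : ∀ (r : ℝ) (z : EuclideanSpace ℝ (Fin n)),
      ∑ i : Fin n, a i.castSucc * (r * z i) = ∑ i : Fin n, r * (a i.castSucc * z i) :=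
    fun r z => Finset.sum_congr rfl fun i _ => by ring
  rw [e, e]; ring

theorem isClosed_aff_le (a b : Fin (n + 1) → ℝ) : IsClosed {x | aff a x ≤ aff b x} :=
  isClosed_le (continuous_aff_right a) (continuous_aff_right b)

theorem convex_aff_le (a b : Fin (n + 1) → ℝ) : Convex ℝ {x | aff a x ≤ aff b x} := by
  intro x hx y hy s t hs ht hst
  simp only [Set.mem_ofPred_eq] at hx hy ⊢
  rw [aff_comb _ _ _ hst, aff_comb _ _ _ hst]
  gcongr

/-- The linear part of `aff a`. -/
noncomputable def affLin (a : Fin (n + 1) → ℝ) : EuclideanSpace ℝ (Fin n) →ₗ[ℝ] ℝ where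
  toFun x := ∑ i : Fin n, a i.castSucc * x i
  map_add' x y := by simp [mul_add, Finset.sum_add_distrib]
  map_smul' r x := by
    simp only [PiLp.smul_apply, smul_eq_mul, RingHom.id_apply, Finset.mul_sum]
    exact Finset.sum_congr rfl fun i _ => by ring

theorem aff_add (a : Fin (n + 1) → ℝ) (x d : EuclideanSpace ℝ (Fin n)) :
    aff a (x + d) = aff a x + affLin a d := by
  simp [aff, affLin, mul_add, Finset.sum_add_distrib, add_assoc]

theorem affLin_ne_zero {a : Fin (n + 1) → ℝ} (ha : a ≠ 0) {x : EuclideanSpace ℝ (Fin n)}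
    (hx : aff a x = 0) : affLin a ≠ 0 := by
  intro h
  apply ha
  have h1 : ∀ i : Fin n, a i.castSucc = 0 := by
    intro i
    have := LinearMap.congr_fun h (EuclideanSpace.single i 1)
    simpa [affLin] using this
  funext i
  refine Fin.lastCases ?_ (fun i => h1 i) i
  simpa [aff, h1] using hx

/-- The zero set of `aff a` is a hyperplane or empty. -/
theorem volume_hyperplane {a : Fin (n + 1) → ℝ} (ha : a ≠ 0) :
    volume {x : EuclideanSpace ℝ (Fin n) | aff a x = 0} = 0 := by
  by_cases hne : ∃ x : EuclideanSpace ℝ (Fin n), aff a x = 0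
  · obtain ⟨x, hx⟩ := hne
    have hL := affLin_ne_zero ha hx
    refine measure_mono_null ?_ (Measure.addHaar_affineSubspace volume
      (AffineSubspace.mk' x (LinearMap.ker (affLin a))) ?_)
    · intro y hy
      simp only [Set.mem_ofPred_eq] at hy
      have := aff_add a x (y - x)
      simp only [add_sub_cancel, hx, hy, zero_add] at this
      simpa [AffineSubspace.mem_mk'] using this.symm
    · intro h
      apply hL
      have := congrArg AffineSubspace.direction h
      rw [AffineSubspace.direction_mk', AffineSubspace.direction_top] at this
      exact LinearMap.ker_eq_top.1 this
  · push Not at hne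
    simp [hne]

theorem volume_tie {a b : Fin (n + 1) → ℝ} (h : a ≠ b) :
    volume {x : EuclideanSpace ℝ (Fin n) | aff a x = aff b x} = 0 := by
  simpa [aff_sub, sub_eq_zero] using volume_hyperplane (sub_ne_zero.2 h)

/-- The measure `ν` does not charge any hyperplane that meets the interior of `C`. -/
def NullHyp (ν : Measure (EuclideanSpace ℝ (Fin n))) (C : Set (EuclideanSpace ℝ (Fin n))) : Prop :=
  ∀ a : Fin (n + 1) → ℝ, a ≠ 0 → (∃ x ∈ interior C, aff a x = 0) → ν {x | aff a x = 0} = 0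

theorem NullHyp.of_ac {ν : Measure (EuclideanSpace ℝ (Fin n))} (h : ν ≪ volume)
    (C : Set (EuclideanSpace ℝ (Fin n))) : NullHyp ν C :=
  fun _ ha _ => h (volume_hyperplane ha)

theorem NullHyp.restrict {ν : Measure (EuclideanSpace ℝ (Fin n))}
    {C D : Set (EuclideanSpace ℝ (Fin n))} (h : NullHyp ν C) (hD : D ⊆ C) :
    NullHyp (ν.restrict D) D := by
  rintro a ha ⟨x, hx, hx0⟩
  exact Measure.restrict_le_self.absolutelyContinuous (h a ha ⟨x, interior_mono hD hx, hx0⟩)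

/-- Inside a hyperplane through an interior point of the convex set `C`, the boundary of `C` is
the relative boundary of the convex set `C ∩ H`, hence null for the `(n - 1)`-dimensional
Hausdorff measure. -/
theorem hausdorff_hyperplane_frontier {C : Set (EuclideanSpace ℝ (Fin n))} (hC : Convex ℝ C)
    {a : Fin (n + 1) → ℝ} (ha : a ≠ 0) {y : EuclideanSpace ℝ (Fin n)} (hy : y ∈ interior C)
    (hy0 : aff a y = 0) :
    μH[(n : ℝ) - 1] ({x | aff a x = 0} ∩ frontier C) = 0 := by
  have hL := affLin_ne_zero ha hy0
  set K := LinearMap.ker (affLin a) with hK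
  have hdim : Module.finrank ℝ K + 1 = n := by
    have h1 := LinearMap.finrank_range_add_finrank_ker (affLin a)
    rw [LinearMap.range_eq_top.2 (LinearMap.surjective hL)] at h1
    rw [finrank_top, Module.finrank_self, finrank_euclideanSpace_fin] at h1
    rw [hK]
    omega
  let φ : K → EuclideanSpace ℝ (Fin n) := fun d => y + d
  have hφ : Isometry φ := fun d e => by simp only [φ, edist_add_left]; rfl
  have hφc : Continuous φ := hφ.continuous
  have hconv : Convex ℝ (φ ⁻¹' C) := by
    have : φ ⁻¹' C = K.subtype ⁻¹' ((fun d => y + d) ⁻¹' C) := rfl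
    rw [this]
    exact (hC.translate_preimage_right y).linear_preimage K.subtype
  have hd : (n : ℝ) - 1 = (Module.finrank ℝ K : ℝ) := by
    have : ((Module.finrank ℝ K + 1 : ℕ) : ℝ) = n := by rw [hdim]
    push_cast at this
    linarith
  have hsub : {x | aff a x = 0} ∩ frontier C ⊆ φ '' frontier (φ ⁻¹' C) := by
    rintro x ⟨hx0, hx⟩
    simp only [Set.mem_ofPred_eq] at hx0
    have hmem : x - y ∈ K := by
      have := aff_add a y (x - y)
      simp only [add_sub_cancel, hx0, hy0, zero_add] at this
      exact this.symm
    have hφx : φ ⟨x - y, hmem⟩ = x := by simp [φ]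
    refine ⟨⟨x - y, hmem⟩, ?_, hφx⟩
    set d : K := ⟨x - y, hmem⟩
    constructor
    · -- `x` is a limit of the points `x + t (y - x)`, which lie in `C`
      have h1 : ∀ t ∈ Set.Ioo (0:ℝ) 1, (1 - t) • d ∈ φ ⁻¹' C := by
        intro t ht
        have : φ ((1 - t) • d) = t • y + (1 - t) • x := by
          simp only [φ, d, Submodule.coe_smul]
          module
        rw [Set.mem_preimage, this]
        refine interior_subset (hC.combo_interior_closure_mem_interior hy hx.1 ht.1
          (by linarith [ht.2]) (by ring))
      have h2 : Filter.Tendsto (fun t : ℝ => (1 - t) • d) (nhdsWithin 0 (Set.Ioo 0 1)) (nhds d) := by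
        have : Continuous fun t : ℝ => (1 - t) • d := by fun_prop
        have := this.tendsto 0
        simp only [sub_zero, one_smul] at this
        exact this.mono_left nhdsWithin_le_nhds
      have : (nhdsWithin (0:ℝ) (Set.Ioo 0 1)).NeBot := by
        rw [← mem_closure_iff_nhdsWithin_neBot, closure_Ioo (by norm_num)]
        simp
      exact mem_closure_of_tendsto h2 (Filter.eventually_of_mem self_mem_nhdsWithin h1)
    · intro hint
      apply hx.2
      -- prolong the segment from `y` through `x` slightly beyond `x` inside `C`
      have h2 : Filter.Tendsto (fun t : ℝ => (1 + t) • d) (nhdsWithin 0 (Set.Ioi 0)) (nhds d) := by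
        have : Continuous fun t : ℝ => (1 + t) • d := by fun_prop
        have := this.tendsto 0
        simp only [add_zero, one_smul] at this
        exact this.mono_left nhdsWithin_le_nhds
      obtain ⟨t, ht, htpos⟩ := ((h2.eventually (isOpen_interior.mem_nhds hint)).and
        self_mem_nhdsWithin).exists
      have htpos : 0 < t := htpos
      have hz : φ ((1 + t) • d) ∈ C := interior_subset (s := φ ⁻¹' C) ht
      have hx' : x = (t / (1 + t)) • y + (1 / (1 + t)) • φ ((1 + t) • d) := by
        simp only [φ, d, Submodule.coe_smul, smul_add, smul_smul, smul_sub]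
        have e : 1 / (1 + t) * (1 + t) = 1 := by field_simp
        rw [e]
        have e2 : t / (1 + t) + 1 / (1 + t) = 1 := by field_simp; ring
        have : x = (t / (1 + t) + 1 / (1 + t)) • y + (x - y) := by rw [e2]; simp
        rw [add_smul] at this
        nth_rewrite 1 [this]
        module
      rw [hx']
      exact hC.combo_interior_closure_mem_interior hy (subset_closure hz) (by positivity)
        (by positivity) (by field_simp; ring)
  refine measure_mono_null hsub ?_
  rw [hφ.hausdorffMeasure_image (Or.inl (by rw [hd]; positivity)), hd]
  exact hconv.addHaar_frontier _

theorem NullHyp.of_frontier {σ : Measure (EuclideanSpace ℝ (Fin n))}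
    {C : Set (EuclideanSpace ℝ (Fin n))} (hC : Convex ℝ C)
    (h : σ ≪ (μH[(n : ℝ) - 1]).restrict (frontier C)) : NullHyp σ C := by
  rintro a ha ⟨y, hy, hy0⟩
  apply h
  rw [Measure.restrict_apply' isClosed_frontier.measurableSet]
  exact hausdorff_hyperplane_frontier hC ha hy hy0

end Affine
end EquiPart

/-! ### Softmax partitions and their limits -/

namespace EquiPart

section Softmax

variable {n p : ℕ}

/-- The part of `C` where the affine function `aff t` dominates all `aff (f h)`. -/
def cell (C : Set (EuclideanSpace ℝ (Fin n))) (f : Cfg n p) (t : Fin (n + 1) → ℝ) :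
    Set (EuclideanSpace ℝ (Fin n)) :=
  C ∩ ⋂ h, {x | aff (f h) x ≤ aff t x}

theorem mem_cell {C : Set (EuclideanSpace ℝ (Fin n))} {f : Cfg n p} {t : Fin (n + 1) → ℝ}
    {x : EuclideanSpace ℝ (Fin n)} : x ∈ cell C f t ↔ x ∈ C ∧ ∀ h, aff (f h) x ≤ aff t x := by
  simp [cell]

variable [Fact p.Prime]

/-- The softmax weight at inverse temperature `s` of the `g`-th of the affine functions
`aff (f h)`: a smooth substitute for the indicator function of the region where
`aff (f g)` is maximal. -/
noncomputable def sm (s : ℝ) (f : Cfg n p) (g : ZMod p) (x : EuclideanSpace ℝ (Fin n)) : ℝ :=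
  Real.exp (s * aff (f g) x) / ∑ h, Real.exp (s * aff (f h) x)

theorem sm_den_pos (s : ℝ) (f : Cfg n p) (x : EuclideanSpace ℝ (Fin n)) :
    0 < ∑ h, Real.exp (s * aff (f h) x) :=
  Finset.sum_pos (fun _ _ => Real.exp_pos _) Finset.univ_nonempty

theorem sm_nonneg (s : ℝ) (f : Cfg n p) (g : ZMod p) (x : EuclideanSpace ℝ (Fin n)) :
    0 ≤ sm s f g x :=
  div_nonneg (Real.exp_pos _).le (sm_den_pos s f x).le

theorem sum_sm (s : ℝ) (f : Cfg n p) (x : EuclideanSpace ℝ (Fin n)) : ∑ g, sm s f g x = 1 := by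
  simp only [sm]
  rw [← Finset.sum_div, div_self (sm_den_pos s f x).ne']

theorem sm_le_one (s : ℝ) (f : Cfg n p) (g : ZMod p) (x : EuclideanSpace ℝ (Fin n)) :
    sm s f g x ≤ 1 := by
  rw [← sum_sm s f x]
  exact Finset.single_le_sum (f := fun g => sm s f g x) (fun h _ => sm_nonneg s f h x)
    (Finset.mem_univ g)

theorem sm_le_exp (s : ℝ) (f : Cfg n p) (g h : ZMod p) (x : EuclideanSpace ℝ (Fin n)) :
    sm s f g x ≤ Real.exp (s * (aff (f g) x - aff (f h) x)) := by
  rw [mul_sub, Real.exp_sub]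
  refine div_le_div_of_nonneg_left (Real.exp_pos _).le (Real.exp_pos _) ?_
  exact Finset.single_le_sum (f := fun h => Real.exp (s * aff (f h) x))
    (fun h _ => (Real.exp_pos _).le) (Finset.mem_univ h)

theorem sm_rot (s : ℝ) (f : Cfg n p) (g : ZMod p) (x : EuclideanSpace ℝ (Fin n)) :
    sm s (rot f) g x = sm s f (g - 1) x := by
  unfold sm
  congr 1
  exact Equiv.sum_comp (Equiv.subRight (1 : ZMod p)) (fun h => Real.exp (s * aff (f h) x))

theorem continuous_sm_left (s : ℝ) (g : ZMod p) (x : EuclideanSpace ℝ (Fin n)) :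
    Continuous fun f : Cfg n p => sm s f g x := by
  have h : ∀ g : ZMod p, Continuous fun f : Cfg n p => Real.exp (s * aff (f g) x) := fun g =>
    Real.continuous_exp.comp (continuous_const.mul
      ((continuous_aff_left x).comp (continuous_apply g)))
  exact (h g).div (continuous_finsetSum _ fun g _ => h g) fun f => (sm_den_pos s f x).ne'

theorem continuous_sm_right (s : ℝ) (f : Cfg n p) (g : ZMod p) : Continuous (sm s f g) := by
  have h : ∀ g : ZMod p, Continuous fun x => Real.exp (s * aff (f g) x) := fun g =>
    Real.continuous_exp.comp (continuous_const.mul (continuous_aff_right _))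
  exact (h g).div (continuous_finsetSum _ fun g _ => h g) fun x => (sm_den_pos s f x).ne'

theorem norm_sm_le (s : ℝ) (f : Cfg n p) (g : ZMod p) (x : EuclideanSpace ℝ (Fin n)) :
    ‖sm s f g x‖ ≤ 1 := by
  rw [Real.norm_of_nonneg (sm_nonneg s f g x)]; exact sm_le_one s f g x

theorem integrable_sm (ν : Measure (EuclideanSpace ℝ (Fin n))) [IsFiniteMeasure ν] (s : ℝ)
    (f : Cfg n p) (g : ZMod p) : Integrable (sm s f g) ν :=
  Integrable.of_bound (continuous_sm_right s f g).aestronglyMeasurable 1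
    (Filter.Eventually.of_forall fun x => norm_sm_le s f g x)

/-- Some configuration in `core n p` has almost equal softmax masses, for all measures at once. -/
theorem exists_soft_config (hn : 1 ≤ n) (ν : Fin n → Measure (EuclideanSpace ℝ (Fin n)))
    [∀ i, IsFiniteMeasure (ν i)] {a : ℝ} (ha : ∀ i, (ν i).real Set.univ = a) (s : ℝ) {η : ℝ}
    (hη : 0 < η) :
    ∃ f ∈ core n p, ∀ i g, |∫ x, sm s f g x ∂ν i - a / p| ≤ η := by
  obtain ⟨f, hf, hb⟩ := exists_config (n := n) (p := p) hn
    (fun f i g => ∫ x, sm s f g x ∂ν i)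
    (by
      refine continuous_pi fun i => continuous_pi fun g => ?_
      exact continuous_of_dominated (bound := fun _ => 1)
        (fun f => (continuous_sm_right s f g).aestronglyMeasurable)
        (fun f => Filter.Eventually.of_forall fun x => norm_sm_le s f g x)
        (integrable_const _)
        (Filter.Eventually.of_forall fun x => continuous_sm_left s g x))
    (by intro f i g; simp only [sm_rot]) hη
  refine ⟨f, hf, fun i g => ?_⟩
  have hp : (0:ℝ) < p := by exact_mod_cast (Fact.out : p.Prime).pos
  have hsum : ∑ h, ∫ x, sm s f h x ∂ν i = a := by
    rw [← integral_finsetSum _ fun h _ => integrable_sm (ν i) s f h]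
    simp [sum_sm, ha]
  have e : p * (∫ x, sm s f g x ∂ν i - a / p) =
      ∑ h, (∫ x, sm s f g x ∂ν i - ∫ x, sm s f h x ∂ν i) := by
    rw [Finset.sum_sub_distrib, hsum, Finset.sum_const, Finset.card_univ, ZMod.card, nsmul_eq_mul]
    field_simp
  have h2 : |(p:ℝ) * (∫ x, sm s f g x ∂ν i - a / p)| ≤ p * η := by
    rw [e]
    refine (Finset.abs_sum_le_sum_abs _ _).trans ?_
    refine (Finset.sum_le_card_nsmul _ _ η fun h _ => hb i g h).trans ?_
    rw [Finset.card_univ, ZMod.card, nsmul_eq_mul]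
  rw [abs_mul, abs_of_pos hp] at h2
  exact le_of_mul_le_mul_left h2 hp

open Filter Topology in
/-- An index whose limiting affine function is dominated at `x` loses its weight there. -/
theorem tendsto_sm_zero {fr : ℕ → Cfg n p} {sr : ℕ → ℝ} (hs : Tendsto sr atTop atTop)
    {f : Cfg n p} (hf : Tendsto fr atTop (𝓝 f)) {x : EuclideanSpace ℝ (Fin n)} {g h : ZMod p}
    (hlt : aff (f g) x < aff (f h) x) :
    Tendsto (fun r => sm (sr r) (fr r) g x) atTop (𝓝 0) := by
  have h1 : ∀ g, Tendsto (fun r => aff (fr r g) x) atTop (𝓝 (aff (f g) x)) := fun g =>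
    ((continuous_aff_left x).tendsto (f g)).comp (((continuous_apply g).tendsto f).comp hf)
  have h2 : Tendsto (fun r => sr r * (aff (fr r g) x - aff (fr r h) x)) atTop atBot :=
    hs.atTop_mul_neg (sub_neg.2 hlt) ((h1 g).sub (h1 h))
  exact squeeze_zero (fun r => sm_nonneg _ _ _ _) (fun r => sm_le_exp _ _ g h x)
    (Real.tendsto_exp_atBot.comp h2)

/-- The number of indices carrying the value `t`. -/
noncomputable def mult (f : Cfg n p) (t : Fin (n + 1) → ℝ) : ℕ := (Finset.univ.filter fun h => f h = t).card

open Filter Topology in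
/-- As the temperature tends to zero, the softmax masses of the indices carrying the value
`f g₀` add up to the mass of the cell of `f g₀`. -/
theorem real_cell (ν : Measure (EuclideanSpace ℝ (Fin n))) [IsFiniteMeasure ν]
    {C : Set (EuclideanSpace ℝ (Fin n))} (hC : IsClosed C) (hνC : ν Cᶜ = 0) {b : ℝ}
    {fr : ℕ → Cfg n p} {sr : ℕ → ℝ} (hs : Tendsto sr atTop atTop) {f : Cfg n p}
    (hf : Tendsto fr atTop (𝓝 f))
    (hm : ∀ g, Tendsto (fun r => ∫ x, sm (sr r) (fr r) g x ∂ν) atTop (𝓝 b))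
    (hties : ∀ g h, f g ≠ f h → ν {x | aff (f g) x = aff (f h) x} = 0) (g₀ : ZMod p) :
    ν.real (cell C f (f g₀)) = mult f (f g₀) * b := by
  set G := Finset.univ.filter fun h => f h = f g₀ with hG
  have hmeas : MeasurableSet (cell C f (f g₀)) :=
    (hC.inter (isClosed_iInter fun h => isClosed_aff_le _ _)).measurableSet
  have h1 : Tendsto (fun r => ∫ x, ∑ g ∈ G, sm (sr r) (fr r) g x ∂ν) atTop
      (𝓝 (mult f (f g₀) * b)) := by
    have : ∀ r, ∫ x, ∑ g ∈ G, sm (sr r) (fr r) g x ∂ν =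
        ∑ g ∈ G, ∫ x, sm (sr r) (fr r) g x ∂ν := fun r =>
      integral_finsetSum _ fun h _ => integrable_sm ν _ _ h
    simp only [this]
    have := tendsto_finsetSum G fun g _ => hm g
    simpa [mult, hG] using this
  have hae : ∀ᵐ x ∂ν, ∀ g h, f g ≠ f h → aff (f g) x ≠ aff (f h) x := by
    rw [ae_all_iff]; intro g
    rw [ae_all_iff]; intro h
    by_cases hgh : f g = f h
    · simp [hgh]
    · simpa [hgh, ae_iff] using hties g h hgh
  have haeC : ∀ᵐ x ∂ν, x ∈ C := mem_ae_iff.2 hνC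
  have h2 : Tendsto (fun r => ∫ x, ∑ g ∈ G, sm (sr r) (fr r) g x ∂ν) atTop
      (𝓝 (∫ x, (cell C f (f g₀)).indicator (fun _ => (1:ℝ)) x ∂ν)) := by
    refine tendsto_integral_of_dominated_convergence (fun _ => 1) ?_ (integrable_const _) ?_ ?_
    · exact fun r => (continuous_finsetSum _ fun g _ =>
        continuous_sm_right _ _ g).aestronglyMeasurable
    · refine fun r => Eventually.of_forall fun x => ?_
      rw [Real.norm_of_nonneg (Finset.sum_nonneg fun g _ => sm_nonneg _ _ g x),
        ← sum_sm (sr r) (fr r) x]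
      exact Finset.sum_le_sum_of_subset_of_nonneg (Finset.subset_univ _)
        fun g _ _ => sm_nonneg _ _ g x
    · filter_upwards [hae, haeC] with x hx hxC
      by_cases hmem : x ∈ cell C f (f g₀)
      · rw [Set.indicator_of_mem hmem]
        have e : ∀ r, ∑ g ∈ G, sm (sr r) (fr r) g x =
            1 - ∑ g ∈ Gᶜ, sm (sr r) (fr r) g x := fun r => by
          rw [eq_sub_iff_add_eq, Finset.sum_add_sum_compl, sum_sm]
        simp only [e]
        have : Tendsto (fun r => ∑ g ∈ Gᶜ, sm (sr r) (fr r) g x) atTop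
            (𝓝 (∑ g ∈ Gᶜ, (0:ℝ))) := by
          refine tendsto_finsetSum _ fun g hg => tendsto_sm_zero hs hf (h := g₀) ?_
          have hne : f g ≠ f g₀ := by simpa [hG] using hg
          exact lt_of_le_of_ne ((mem_cell.1 hmem).2 g) (hx g g₀ hne)
        simpa using this.const_sub 1
      · rw [Set.indicator_of_notMem hmem]
        have : ∃ h, aff (f g₀) x < aff (f h) x := by
          by_contra! hcon
          exact hmem (mem_cell.2 ⟨hxC, hcon⟩)
        obtain ⟨h, hh⟩ := this
        have : Tendsto (fun r => ∑ g ∈ G, sm (sr r) (fr r) g x) atTop (𝓝 (∑ g ∈ G, (0:ℝ))) := by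
          refine tendsto_finsetSum _ fun g hg => tendsto_sm_zero hs hf (h := h) ?_
          have he : f g = f g₀ := by simpa [hG] using hg
          rw [he]; exact hh
        simpa using this
  have := tendsto_nhds_unique h2 h1
  rwa [integral_indicator_const _ hmeas, smul_eq_mul, mul_one] at this

end Softmax
end EquiPart

/-! ### Convex equipartitions -/

namespace EquiPart

section Cells

variable {n p : ℕ} [Fact p.Prime]

open Filter Topology in
/-- For a prime `p` some non-constant `p`-tuple of affine functions cuts `C` into cells whose
masses are proportional to the multiplicities of the functions in the tuple. -/
theorem exists_cells {C : Set (EuclideanSpace ℝ (Fin n))} (hC : IsClosed C) (hconv : Convex ℝ C)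
    (ν : Fin n → Measure (EuclideanSpace ℝ (Fin n))) (hfin : ∀ i, IsFiniteMeasure (ν i))
    (hνC : ∀ i, ν i Cᶜ = 0) (i₀ : Fin n) (hac : ν i₀ ≪ volume) (hnull : ∀ i, NullHyp (ν i) C)
    {a : ℝ} (ha : 0 < a) (hν : ∀ i, (ν i).real Set.univ = a) :
    ∃ f : Cfg n p, (∃ g h, f g ≠ f h) ∧
      ∀ i g, (ν i).real (cell C f (f g)) * p = mult f (f g) * a := by
  have hn : 1 ≤ n := Fin.pos i₀
  have hp : (0:ℝ) < p := by exact_mod_cast (Fact.out : p.Prime).pos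
  choose fr hfr hb using fun r : ℕ =>
    exists_soft_config (p := p) hn ν hν (r : ℝ) (Nat.one_div_pos_of_nat (α := ℝ) (n := r))
  obtain ⟨f, hf, φ, hφ, hlim⟩ := (isCompact_core (n := n) (p := p)).tendsto_subseq hfr
  have hm : ∀ i g, Tendsto (fun r => ∫ x, sm ((φ r : ℕ) : ℝ) (fr (φ r)) g x ∂ν i) atTop
      (𝓝 (a / p)) := by
    intro i g
    have h1 : Tendsto (fun r : ℕ => ∫ x, sm (r : ℝ) (fr r) g x ∂ν i) atTop (𝓝 (a / p)) := by
      rw [tendsto_iff_dist_tendsto_zero]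
      exact squeeze_zero (fun _ => dist_nonneg) (fun r => hb r i g)
        tendsto_one_div_add_atTop_nhds_zero_nat
    exact h1.comp hφ.tendsto_atTop
  have hs : Tendsto (fun r => ((φ r : ℕ) : ℝ)) atTop atTop :=
    tendsto_natCast_atTop_atTop.comp hφ.tendsto_atTop
  have key : ∀ i, (∀ g h, f g ≠ f h → ν i {x | aff (f g) x = aff (f h) x} = 0) → ∀ g,
      (ν i).real (cell C f (f g)) = mult f (f g) * (a / p) := fun i hi g =>
    real_cell (ν i) hC (hνC i) hs hlim (hm i) hi g
  -- the absolutely continuous measure does not see ties; the other ones will follow from this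
  have hties₀ : ∀ g h, f g ≠ f h → ν i₀ {x | aff (f g) x = aff (f h) x} = 0 :=
    fun g h hgh => hac (volume_tie hgh)
  have hmult : ∀ g, 0 < mult f (f g) := fun g => Finset.card_pos.2 ⟨g, by simp⟩
  have hpos : ∀ g, ν i₀ (cell C f (f g)) ≠ 0 := by
    intro g h0
    have h1 := key i₀ hties₀ g
    have h2 : (0:ℝ) < mult f (f g) := by exact_mod_cast hmult g
    rw [Measure.real, h0] at h1
    have : 0 < (mult f (f g) : ℝ) * (a / p) := by positivity
    simp at h1
    rcases h1 with h1 | h1 | h1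
    · exact h2.ne' (by exact_mod_cast h1)
    · exact ha.ne' h1
    · exact hp.ne' (by exact_mod_cast h1)
  have hint : (interior C).Nonempty := by
    by_contra hemp
    rw [Set.not_nonempty_iff_eq_empty] at hemp
    have h1 := hconv.addHaar_frontier volume
    rw [frontier, hemp, hC.closure_eq, Set.sdiff_empty] at h1
    exact hpos 0 (measure_mono_null (fun x hx => (mem_cell.1 hx).1) (hac h1))
  -- the cell of `f g` has positive mass and ties have none, so the inequality is strict somewhere
  have hstrict : ∀ g h, f g ≠ f h → ∃ x ∈ interior C, aff (f h) x < aff (f g) x := by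
    intro g h hgh
    obtain ⟨x, hxC, hx⟩ : ∃ x ∈ C, aff (f h) x < aff (f g) x := by
      by_contra! hcon
      refine hpos g (measure_mono_null (fun x hx => ?_) (hties₀ g h hgh))
      have hx := mem_cell.1 hx
      exact le_antisymm (hcon x hx.1) (hx.2 h)
    have hopen : IsOpen {x | aff (f h) x < aff (f g) x} :=
      isOpen_lt (continuous_aff_right _) (continuous_aff_right _)
    have hcl : x ∈ closure (interior C) := by
      rw [hconv.closure_interior_eq_closure_of_nonempty_interior hint]
      exact subset_closure hxC
    obtain ⟨y, hy, hy'⟩ := mem_closure_iff.1 hcl _ hopen hx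
    exact ⟨y, hy', hy⟩
  refine ⟨f, core_not_const hf, fun i g => ?_⟩
  rw [key i ?_ g]
  · field_simp
  · intro g h hgh
    obtain ⟨x, hx, hx'⟩ := hstrict g h hgh
    obtain ⟨y, hy, hy'⟩ := hstrict h g hgh.symm
    obtain ⟨z, hz, hz'⟩ := hconv.interior.isPreconnected.intermediate_value₂ hy hx
      (continuous_aff_right (f g)).continuousOn (continuous_aff_right (f h)).continuousOn
      hy'.le hx'.le
    have := hnull i (f g - f h) (sub_ne_zero.2 hgh) ⟨z, hz, by rw [aff_sub, hz', sub_self]⟩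
    simpa [aff_sub, sub_eq_zero] using this

end Cells

section Induction

variable {n : ℕ}

/-- `C` has a partition into `q` closed convex parts, each of which carries the fraction `1 / q`
of the total mass `a` for every one of the measures `ν i`. -/
def Parts (C : Set (EuclideanSpace ℝ (Fin n))) (ν : Fin n → Measure (EuclideanSpace ℝ (Fin n)))
    (a : ℝ) (q : ℕ) : Prop :=
  ∃ V : Fin q → Set (EuclideanSpace ℝ (Fin n)),
    (∀ j, IsClosed (V j)) ∧ (∀ j, Convex ℝ (V j)) ∧ (⋃ j, V j) = C ∧
    (∀ j l, j ≠ l → volume (V j ∩ V l) = 0) ∧ ∀ i j, (ν i).real (V j) * q = a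

/-- Equipartition into `q` convex parts is possible for all closed convex sets of `ℝⁿ` and all
families of `n` measures of equal positive mass that do not charge interior hyperplanes, one of
them being absolutely continuous. -/
def Goal (n q : ℕ) : Prop :=
  ∀ (C : Set (EuclideanSpace ℝ (Fin n))) (ν : Fin n → Measure (EuclideanSpace ℝ (Fin n)))
    (i₀ : Fin n) (a : ℝ), IsClosed C → Convex ℝ C → (∀ i, IsFiniteMeasure (ν i)) →
    (∀ i, ν i Cᶜ = 0) → ν i₀ ≪ volume → (∀ i, NullHyp (ν i) C) → 0 < a →
    (∀ i, (ν i).real Set.univ = a) → Parts C ν a q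

/-- Refining a partition whose parts have masses proportional to integers `m t`. -/
theorem parts_of_refine {C : Set (EuclideanSpace ℝ (Fin n))}
    {ν : Fin n → Measure (EuclideanSpace ℝ (Fin n))} {i₀ : Fin n} {a : ℝ}
    (hfin : ∀ i, IsFiniteMeasure (ν i)) (hac : ν i₀ ≪ volume) (hnull : ∀ i, NullHyp (ν i) C)
    (ha : 0 < a) {q : ℕ} (hq : 0 < q) {τ : Type} [Fintype τ]
    (W : τ → Set (EuclideanSpace ℝ (Fin n))) (m : τ → ℕ) (hm : ∀ t, 0 < m t)
    (hsum : ∑ t, m t = q) (hWcl : ∀ t, IsClosed (W t)) (hWco : ∀ t, Convex ℝ (W t))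
    (hWC : (⋃ t, W t) = C) (hWn : ∀ t u, t ≠ u → volume (W t ∩ W u) = 0)
    (hmass : ∀ i t, (ν i).real (W t) * q = m t * a) (hgoal : ∀ t, Goal n (m t)) :
    Parts C ν a q := by
  have hq' : (0:ℝ) < q := by exact_mod_cast hq
  have hsub : ∀ t, W t ⊆ C := fun t => hWC ▸ Set.subset_iUnion W t
  have hm' : ∀ t, (0:ℝ) < m t := fun t => by exact_mod_cast hm t
  have h1 : ∀ t, Parts (W t) (fun i => (ν i).restrict (W t)) (m t * a / q) (m t) := by
    intro t
    refine hgoal t (W t) _ i₀ _ (hWcl t) (hWco t) (fun i => inferInstance) (fun i => ?_) ?_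
      (fun i => (hnull i).restrict (hsub t)) ?_ (fun i => ?_)
    · rw [Measure.restrict_apply (hWcl t).measurableSet.compl, Set.compl_inter_self, measure_empty]
    · exact Measure.restrict_le_self.absolutelyContinuous.trans hac
    · have := hm' t
      positivity
    · rw [measureReal_restrict_apply MeasurableSet.univ, Set.univ_inter, eq_div_iff hq'.ne']
      exact hmass i t
  choose V hVcl hVco hVW hVn hVm using h1
  have hVsub : ∀ t j, V t j ⊆ W t := fun t j => hVW t ▸ Set.subset_iUnion (V t) j
  let e : (Σ t, Fin (m t)) ≃ Fin q := Fintype.equivFinOfCardEq (by simp [hsum])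
  refine ⟨fun j => V (e.symm j).1 (e.symm j).2, fun j => hVcl _ _, fun j => hVco _ _, ?_, ?_, ?_⟩
  · rw [e.symm.surjective.iUnion_comp (fun s : Σ t, Fin (m t) => V s.1 s.2), Set.iUnion_sigma]
    simp only [hVW, hWC]
  · intro j l hjl
    have hne : e.symm j ≠ e.symm l := fun h => hjl (e.symm.injective h)
    beta_reduce
    generalize e.symm j = s at hne ⊢
    generalize e.symm l = s' at hne ⊢
    obtain ⟨t, j⟩ := s
    obtain ⟨u, l⟩ := s'
    by_cases htu : t = u
    · subst htu
      exact hVn t j l fun h => hne (by rw [h])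
    · exact measure_mono_null (Set.inter_subset_inter (hVsub _ _) (hVsub _ _)) (hWn t u htu)
  · intro i j
    beta_reduce
    generalize e.symm j = s
    obtain ⟨t, j⟩ := s
    have h2 := hVm t i j
    rw [measureReal_restrict_apply (hVcl t j).measurableSet,
      Set.inter_eq_left.2 (hVsub t j)] at h2
    have := hm' t
    field_simp at h2
    simpa using h2

theorem goal_one : Goal n 1 := by
  intro C ν i₀ a hC hco hfin hνC hac hnull ha hν
  refine ⟨fun _ => C, fun _ => hC, fun _ => hco, Set.iUnion_const _, fun j l hjl =>
    absurd (Subsingleton.elim j l) hjl, fun i j => ?_⟩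
  have : (ν i) C = (ν i) Set.univ := measure_of_measure_compl_eq_zero (hνC i)
  rw [Measure.real, this, Nat.cast_one, mul_one]
  exact hν i

/-- The cells of `exists_cells` have multiplicities less than `p`, so they can be subdivided by
induction. -/
theorem goal_prime {p : ℕ} (hp : p.Prime) (ih : ∀ m < p, 0 < m → Goal n m) : Goal n p := by
  intro C ν i₀ a hC hco hfin hνC hac hnull ha hν
  have : Fact p.Prime := ⟨hp⟩
  obtain ⟨f, ⟨g₁, g₂, hne⟩, hmass⟩ :=
    exists_cells (p := p) hC hco ν hfin hνC i₀ hac hnull ha hν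
  have hmem : ∀ t : (Finset.univ.image f : Finset (Fin (n + 1) → ℝ)), ∃ g, f g = t := fun t =>
    let ⟨g, _, hg⟩ := Finset.mem_image.1 t.2
    ⟨g, hg⟩
  have hpos : ∀ t : (Finset.univ.image f : Finset (Fin (n + 1) → ℝ)), 0 < mult f t := by
    intro t
    obtain ⟨g, hg⟩ := hmem t
    exact Finset.card_pos.2 ⟨g, by simp [hg]⟩
  refine parts_of_refine hfin hac hnull ha hp.pos
    (τ := (Finset.univ.image f : Finset (Fin (n + 1) → ℝ))) (fun t => cell C f t)
    (fun t => mult f t) hpos ?_ ?_ ?_ ?_ ?_ ?_ ?_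
  · rw [Finset.sum_coe_sort (Finset.univ.image f) (fun t => mult f t)]
    have := Finset.card_eq_sum_card_image f Finset.univ
    rw [Finset.card_univ, ZMod.card] at this
    exact this.symm
  · exact fun t => hC.inter (isClosed_iInter fun h => isClosed_aff_le _ _)
  · exact fun t => hco.inter (convex_iInter fun h => convex_aff_le _ _)
  · refine Set.Subset.antisymm (Set.iUnion_subset fun t x hx => (mem_cell.1 hx).1) fun x hx => ?_
    obtain ⟨g, hg⟩ := Finite.exists_max fun g => aff (f g) x
    exact Set.mem_iUnion.2 ⟨⟨f g, by simp⟩, mem_cell.2 ⟨hx, hg⟩⟩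
  · intro t u htu
    obtain ⟨g, hg⟩ := hmem t
    obtain ⟨h, hh⟩ := hmem u
    refine measure_mono_null ?_ (volume_tie (n := n) (fun h => htu (Subtype.ext h)))
    rintro x ⟨hx, hx'⟩
    have h1 := (mem_cell.1 hx).2 h
    have h2 := (mem_cell.1 hx').2 g
    rw [hh] at h1
    rw [hg] at h2
    exact le_antisymm h2 h1
  · intro i t
    obtain ⟨g, hg⟩ := hmem t
    simpa only [hg] using hmass i g
  · refine fun t => ih _ ?_ (hpos t)
    -- as `f` is not constant, no value is taken on all of `ZMod p`
    have : ∃ g, f g ≠ t := by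
      by_contra! hcon
      exact hne (by rw [hcon, hcon])
    obtain ⟨g, hg⟩ := this
    calc mult f t < (Finset.univ : Finset (ZMod p)).card :=
          Finset.card_lt_card (Finset.filter_ssubset.2 ⟨g, Finset.mem_univ _, hg⟩)
      _ = p := by rw [Finset.card_univ, ZMod.card]

/-- Subdivide each of `b` equal parts into `c` parts. -/
theorem goal_mul {b c : ℕ} (hb0 : 0 < b) (hc0 : 0 < c) (hb : Goal n b) (hc : Goal n c) :
    Goal n (b * c) := by
  intro C ν i₀ a hC hco hfin hνC hac hnull ha hν
  obtain ⟨V, h1, h2, h3, h4, h5⟩ := hb C ν i₀ a hC hco hfin hνC hac hnull ha hν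
  refine parts_of_refine hfin hac hnull ha (Nat.mul_pos hb0 hc0) V (fun _ => c) (fun _ => hc0)
    (by simp) h1 h2 h3 h4 (fun i t => ?_) (fun _ => hc)
  rw [← h5 i t]; push_cast; ring

theorem goal_all (q : ℕ) (hq : 0 < q) : Goal n q := by
  induction q using Nat.strong_induction_on with
  | _ q ih =>
    rcases Nat.lt_or_ge q 2 with h | h
    · obtain rfl : q = 1 := by omega
      exact goal_one
    · by_cases hp : q.Prime
      · exact goal_prime hp fun m hm hm0 => ih m hm hm0
      · obtain ⟨b, c, hb, hc, rfl⟩ := (Nat.not_prime_iff_exists_mul_eq h).1 hp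
        have hb0 : 0 < b := Nat.pos_of_mul_pos_right hq
        have hc0 : 0 < c := Nat.pos_of_mul_pos_left hq
        exact goal_mul hb0 hc0 (ih b hb hb0) (ih c hc hc0)

end Induction
end EquiPart

/-- A convex body `C ⊆ ℝⁿ` can be partitioned into `q` convex parts simultaneously
equalizing `k` absolutely continuous measures on `C` and `n - k` absolutely continuous
measures on the boundary `∂C`, for any `q ≥ 1`. -/
theorem stmt_7 (n k : ℕ) (hk1 : 1 ≤ k) (hkn : k ≤ n)
    (C : Set (EuclideanSpace ℝ (Fin n)))
    (hC : IsCompact C) (hCconv : Convex ℝ C) (hCint : (interior C).Nonempty)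
    (μs : Fin k → Measure (EuclideanSpace ℝ (Fin n)))
    (hμprob : ∀ i, IsProbabilityMeasure (μs i))
    (hμC : ∀ i, μs i Cᶜ = 0) (hμac : ∀ i, μs i ≪ volume)
    (σs : Fin (n - k) → Measure (EuclideanSpace ℝ (Fin n)))
    (hσprob : ∀ i, IsProbabilityMeasure (σs i))
    (hσC : ∀ i, σs i (frontier C)ᶜ = 0)
    (hσac : ∀ i, σs i ≪ (μH[(n : ℝ) - 1]).restrict (frontier C))
    (q : ℕ) (hq : 1 ≤ q) :
    ∃ V : Fin q → Set (EuclideanSpace ℝ (Fin n)),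
      (∀ j, IsClosed (V j)) ∧ (∀ j, Convex ℝ (V j)) ∧
      (⋃ j, V j) = C ∧
      (∀ j l, j ≠ l → volume (V j ∩ V l) = 0) ∧
      (∀ (i : Fin k) (j l : Fin q), μs i (V j) = μs i (V l)) ∧
      (∀ (i : Fin (n - k)) (j l : Fin q),
        σs i (V j ∩ frontier C) = σs i (V l ∩ frontier C)) := by
  let e : Fin k ⊕ Fin (n - k) ≃ Fin n :=
    finSumFinEquiv.trans (finCongr (Nat.add_sub_of_le hkn))
  let ν : Fin n → Measure (EuclideanSpace ℝ (Fin n)) := fun i => Sum.elim μs σs (e.symm i)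
  have hνl : ∀ i, ν (e (Sum.inl i)) = μs i := fun i => by simp [ν]
  have hνr : ∀ i, ν (e (Sum.inr i)) = σs i := fun i => by simp [ν]
  have hall : ∀ P : Measure (EuclideanSpace ℝ (Fin n)) → Prop, (∀ i, P (μs i)) →
      (∀ i, P (σs i)) → ∀ i, P (ν i) := by
    intro P h1 h2 i
    simp only [ν]
    rcases e.symm i with j | j
    · exact h1 j
    · exact h2 j
  have hprob : ∀ i, IsProbabilityMeasure (ν i) := hall _ hμprob hσprob
  have hfC : frontier C ⊆ C := hC.isClosed.frontier_subset
  obtain ⟨V, h1, h2, h3, h4, h5⟩ := EquiPart.goal_all (n := n) q hq C ν (e (Sum.inl ⟨0, hk1⟩)) 1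
    hC.isClosed hCconv (fun i => inferInstance)
    (hall (fun m => m Cᶜ = 0) hμC fun i =>
      measure_mono_null (Set.compl_subset_compl.2 hfC) (hσC i))
    (by rw [hνl]; exact hμac _)
    (hall (fun m => EquiPart.NullHyp m C) (fun i => EquiPart.NullHyp.of_ac (hμac i) C)
      fun i => EquiPart.NullHyp.of_frontier hCconv (hσac i))
    one_pos (fun i => by simp)
  have hq' : (q : ℝ) ≠ 0 := by exact_mod_cast (Nat.one_le_iff_ne_zero.1 hq)
  have heq : ∀ i j l, ν i (V j) = ν i (V l) := fun i j l => by
    have h := mul_right_cancel₀ hq' ((h5 i j).trans (h5 i l).symm)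
    exact (measureReal_eq_measureReal_iff (by finiteness) (by finiteness)).1 h
  refine ⟨V, h1, h2, h3, h4, fun i j l => ?_, fun i j l => ?_⟩
  · have := heq (e (Sum.inl i)) j l
    rwa [hνl] at this
  · have := heq (e (Sum.inr i)) j l
    rw [hνr] at this
    rwa [measure_inter_conull (hσC i), measure_inter_conull (hσC i)]
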